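/- arXiv:1610.04182 — 8 statements merged into one kernel-verified Lean document; each statement's English description precedes it below -/
import Mathlib

section
/- Derivatives in the tubular neighborhood: for every z ∈ Ω with 0 < d(z) < δ, the distance function d and the nearest-point projection p are differentiable at z and, writing ν = ν(p(z)), κ = κ(p(z)), κ' = κ'(p(z)), one has ∇d(z) = -ν, Dp(z) = (1/(1 - d(z)κ))·(iν)(iν)ᵀ, D(ν∘p)(z) = κ·Dp(z), and ∇(κ∘p)(z) = (κ'/(1 - d(z)κ))·iν. -/
/- Real inner product on ℂ ≅ ℝ², as a number, as a continuous linear functional,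
   and the orthogonal projection matrix e eᵀ onto the line ℝe. -/
noncomputable def ipr (z w : ℂ) : ℝ := z.re * w.re + z.im * w.im

noncomputable def iprCLM (g : ℂ) : ℂ →L[ℝ] ℝ := g.re • Complex.reCLM + g.im • Complex.imCLM

noncomputable def projCLM (e : ℂ) : ℂ →L[ℝ] ℂ := (iprCLM e).smulRight e

/-!
Consider the tubular coordinates `(t, s) ↦ γ t - s • ν (γ t)`. By the Frenet equations their
differential is `(a, b) ↦ a (1 - s κ) iν - b ν`, which is invertible as soon as `s κ ≠ 1`.

Compactness and the uniqueness of the nearest point of `z` make it possible to write `p w = γ (τ w)`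
for `w` near `z`, with `τ` continuous at `z`. The map `w ↦ (τ w, d w)` is then a continuous local
right inverse of the tubular coordinates, hence differentiable at `z` with the inverse differential:
`Dτ = (1 - d κ)⁻¹ ⟨iν, ·⟩` and `Dd = ⟨-ν, ·⟩`. The remaining formulas follow by the chain rule.
-/

open Filter Topology

lemma one_sub_mul_ne_zero_of_abs_lt {α : Type*} [Field α] [LinearOrder α] [IsStrictOrderedRing α]
    {a b δ : α} (ha : 0 ≤ a) (haδ : a ≤ δ) (hb : |b| < 1 / δ) : 1 - a * b ≠ 0 := by
  have hδ : 0 < δ := one_div_pos.mp ((abs_nonneg b).trans_lt hb)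
  have hab : a * b < 1 :=
    calc a * b ≤ a * |b| := mul_le_mul_of_nonneg_left (le_abs_self b) ha
      _ ≤ δ * |b| := mul_le_mul_of_nonneg_right haδ (abs_nonneg b)
      _ < 1 := (lt_div_iff₀' hδ).mp hb
  exact (sub_pos.mpr hab).ne'

section NormedSpace

variable {𝕜 E F : Type*} [NontriviallyNormedField 𝕜] [NormedAddCommGroup E] [NormedSpace 𝕜 E]
  [NormedAddCommGroup F] [NormedSpace 𝕜 F]

lemma hasFDerivAt_comp_smulRight {g : 𝕜 → F} {v : F} {τ : E → 𝕜} {τ' : E →L[𝕜] 𝕜} {x : E}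
    (hg : HasDerivAt g v (τ x)) (hτ : HasFDerivAt τ τ' x) :
    HasFDerivAt (g ∘ τ) (τ'.smulRight v) x :=
  (hg.hasFDerivAt.comp x hτ).congr_fderiv (by ext; simp)

lemma differentiableAt_of_smul [SeparatingDual 𝕜 F] {k : E → 𝕜} {T : E → F} {x : E}
    (hkT : DifferentiableAt 𝕜 (fun y => k y • T y) x) (hT : DifferentiableAt 𝕜 T x)
    (hTx : T x ≠ 0) : DifferentiableAt 𝕜 k x := by
  obtain ⟨φ, hφ⟩ : ∃ φ : F →L[𝕜] 𝕜, φ (T x) ≠ 0 := SeparatingDual.exists_ne_zero hTx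
  have hφT : DifferentiableAt 𝕜 (fun y => φ (T y)) x := φ.differentiableAt.comp x hT
  have hφkT : DifferentiableAt 𝕜 (fun y => φ (k y • T y)) x := φ.differentiableAt.comp x hkT
  refine (hφkT.fun_mul (hφT.fun_inv hφ)).congr_of_eventuallyEq ?_
  filter_upwards [hφT.continuousAt.eventually_ne hφ] with y hy
  simp only [map_smul, smul_eq_mul, mul_inv_cancel_right₀ hy]

end NormedSpace

lemma exists_continuousAt_parameter_of_nearest {X α : Type*} [TopologicalSpace X]
    [PseudoMetricSpace α] {f : X → α} {K : Set X} (hK : IsCompact K) (hf : ContinuousOn f K)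
    {p : α → α} {z : α} {x₀ : X}
    (hp : ∀ᶠ w in 𝓝 z, p w ∈ f '' K ∧ dist w (p w) = Metric.infDist w (f '' K))
    (huniq : ∀ x ∈ K, dist z (f x) = Metric.infDist z (f '' K) → x = x₀) :
    ∃ τ : α → X, ContinuousAt τ z ∧ τ z = x₀ ∧ p =ᶠ[𝓝 z] f ∘ τ := by
  have hex : ∀ᶠ w in 𝓝 z, ∃ x, x ∈ K ∧ f x = p w := hp.mono fun _ hw => hw.1
  obtain ⟨τ, hτ⟩ := hex.choice
  have hdist : ∀ᶠ w in 𝓝 z, dist w (f (τ w)) = Metric.infDist w (f '' K) := by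
    filter_upwards [hτ, hp] with w hτw hpw
    rw [hτw.2, hpw.2]
  have hτz : τ z = x₀ := huniq _ hτ.self_of_nhds.1 hdist.self_of_nhds
  refine ⟨τ, ?_, hτz, hτ.mono fun w hw => hw.2.symm⟩
  rw [ContinuousAt, hτz]
  refine hK.tendsto_nhds_of_unique_mapClusterPt (hτ.mono fun _ hw => hw.1) fun x hx hcluster =>
    huniq x hx ?_
  obtain ⟨U, hUz, hτU⟩ := mapClusterPt_iff_ultrafilter.mp hcluster
  have hfτU : Tendsto (fun w => f (τ w)) U (𝓝 (f x)) :=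
    (hf x hx).tendsto.comp
      (tendsto_nhdsWithin_iff.mpr ⟨hτU, hUz (hτ.mono fun _ hw => hw.1)⟩)
  have hdistU : Tendsto (fun w => dist w (f (τ w))) U (𝓝 (dist z (f x))) :=
    Tendsto.dist (tendsto_id.mono_left hUz) hfτU
  have hinfDistU : Tendsto (fun w => Metric.infDist w (f '' K)) U
      (𝓝 (Metric.infDist z (f '' K))) :=
    ((Metric.continuous_infDist_pt _).tendsto z).mono_left hUz
  exact tendsto_nhds_unique (hdistU.congr' (hUz hdist)) hinfDistU

lemma eq_of_periodic_of_injOn_Ico {α β : Type*} [AddCommGroup α] [LinearOrder α]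
    [IsOrderedAddMonoid α] [Archimedean α] {L : α} (hL : 0 < L) {γ : α → β}
    (hγ : Function.Periodic γ L) (hinj : Set.InjOn γ (Set.Ico 0 L)) {s t : α}
    (hst : |s - t| < L) (h : γ s = γ t) : s = t := by
  have hlift (u : α) : γ (toIcoMod hL 0 u) = γ u := by
    rw [toIcoMod, hγ.sub_zsmul_eq]
  have hmem (u : α) : toIcoMod hL 0 u ∈ Set.Ico 0 L := by
    simpa only [zero_add] using toIcoMod_mem_Ico hL 0 u
  have hmod : toIcoMod hL 0 t = toIcoMod hL 0 s :=
    hinj (hmem t) (hmem s) (by rw [hlift, hlift, h])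
  obtain ⟨n, hn⟩ := (toIcoMod_eq_toIcoMod hL).mp hmod
  have hn0 : n = 0 := by
    rw [← Int.abs_lt_one_iff, ← zsmul_lt_zsmul_iff_left hL, one_zsmul]
    rwa [hn, abs_zsmul, abs_of_pos hL] at hst
  rwa [hn0, zero_smul, sub_eq_zero] at hn

lemma iprCLM_smul (r : ℝ) (g : ℂ) : iprCLM (r • g) = r • iprCLM g := by
  simp only [iprCLM, Complex.smul_re, Complex.smul_im, smul_add, smul_assoc]

lemma iprCLM_neg (g : ℂ) : iprCLM (-g) = -iprCLM g := by
  ext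
  simp [iprCLM, add_comm]

lemma iprCLM_self (g : ℂ) : iprCLM g g = ‖g‖ ^ 2 := by
  simp [iprCLM, ← Complex.normSq_eq_norm_sq, Complex.normSq_apply]

lemma iprCLM_I_mul_self (g : ℂ) : iprCLM (Complex.I * g) g = 0 := by
  simp [iprCLM, mul_comm]

lemma iprCLM_self_I_mul (g : ℂ) : iprCLM g (Complex.I * g) = 0 := by
  simp [iprCLM, mul_comm]

lemma iprCLM_I_mul_smul_add_iprCLM_smul (g w : ℂ) :
    iprCLM (Complex.I * g) w • (Complex.I * g) + iprCLM g w • g = ‖g‖ ^ 2 • w := by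
  rw [← iprCLM_self]
  apply Complex.ext <;> simp [iprCLM] <;> ring

/-- The isomorphism `(a, b) ↦ a c (i n) - b n`, which has the diagonal matrix with entries `c` and
`1` in the orthonormal frame `(i n, -n)`: the shape of the differential of tubular coordinates. -/
noncomputable def scaledFrameEquiv {n : ℂ} (hn : ‖n‖ = 1) {c : ℝ} (hc : c ≠ 0) :
    (ℝ × ℝ) ≃L[ℝ] ℂ :=
  ContinuousLinearEquiv.equivOfInverse
    ((ContinuousLinearMap.fst ℝ ℝ ℝ).smulRight (c • (Complex.I * n))
      + (ContinuousLinearMap.snd ℝ ℝ ℝ).smulRight (-n))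
    (((1 / c) • iprCLM (Complex.I * n)).prod (iprCLM (-n)))
    (fun x => by
      have htangent : iprCLM (Complex.I * n) (Complex.I * n) = 1 := by simp [iprCLM_self, hn]
      have hnormal : iprCLM n n = 1 := by simp [iprCLM_self, hn]
      apply Prod.ext <;>
        simp [-Complex.real_smul, iprCLM_neg, iprCLM_I_mul_self, iprCLM_self_I_mul, htangent,
          hnormal, mul_comm x.1, hc])
    (fun w => by
      have hframe := iprCLM_I_mul_smul_add_iprCLM_smul n w
      rw [hn, one_pow, one_smul] at hframe
      simpa [-Complex.real_smul, iprCLM_neg, smul_smul, mul_right_comm _ _ c, hc] using hframe)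

/-- Tubular coordinates along the curve `γ` with respect to the normal field `N`; the sign makes
`s ≥ 0` the side `-N` points to. -/
noncomputable def tubularMap (γ N : ℝ → ℂ) (x : ℝ × ℝ) : ℂ := γ x.1 - x.2 • N x.1

/-- The Frenet equations at the parameter `t`: `γ` has unit speed at `t`, exterior normal `N`
(the tangent rotated by `-π/2`) and curvature `k`. -/
structure IsFrenetAt (γ N : ℝ → ℂ) (k t : ℝ) : Prop where
  norm_normal : ‖N t‖ = 1
  hasDerivAt_curve : HasDerivAt γ (Complex.I * N t) t
  hasDerivAt_normal : HasDerivAt N (k • (Complex.I * N t)) t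

lemma isFrenetAt_of_deriv {γ N : ℝ → ℂ} {k t : ℝ} (hγ : DifferentiableAt ℝ γ t)
    (hγ' : DifferentiableAt ℝ (deriv γ) t) (hunit : ‖deriv γ t‖ = 1)
    (hN : ∀ s, N s = -Complex.I * deriv γ s) (hk : deriv N t = k * deriv γ t) :
    IsFrenetAt γ N k t := by
  have htangent : Complex.I * N t = deriv γ t := by
    rw [hN, ← mul_assoc, mul_neg, Complex.I_mul_I, neg_neg, one_mul]
  have hNdiff : DifferentiableAt ℝ N t := by
    rw [funext hN]
    exact hγ'.const_mul _
  refine ⟨?_, ?_, ?_⟩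
  · rw [hN, norm_mul, norm_neg, Complex.norm_I, hunit, one_mul]
  · rw [htangent]
    exact hγ.hasDerivAt
  · rw [htangent, Complex.real_smul, ← hk]
    exact hNdiff.hasDerivAt

lemma differentiable_curvature {γ N : ℝ → ℂ} {k : ℝ → ℝ} (hγ : ContDiff ℝ 3 γ)
    (hreg : ∀ t, deriv γ t ≠ 0) (hN : ∀ t, N t = -Complex.I * deriv γ t)
    (hk : ∀ t, deriv N t = k t * deriv γ t) : Differentiable ℝ k := by
  have hγ' : ContDiff ℝ 2 (deriv γ) := ContDiff.deriv' hγ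
  have hN' : ContDiff ℝ 1 (deriv N) := by
    rw [funext hN]
    exact ContDiff.deriv' (n := 1) (contDiff_const.mul hγ')
  have hkγ' : (fun t => k t • deriv γ t) = deriv N := by
    funext t
    rw [hk, Complex.real_smul]
  intro t
  refine differentiableAt_of_smul (T := deriv γ) ?_ (hγ'.differentiable two_ne_zero t) (hreg t)
  rw [hkγ']
  exact hN'.differentiable one_ne_zero t

lemma IsFrenetAt.hasFDerivAt_tubularMap {γ N : ℝ → ℂ} {k t s : ℝ} (h : IsFrenetAt γ N k t)
    (hs : 1 - s * k ≠ 0) :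
    HasFDerivAt (tubularMap γ N) (scaledFrameEquiv h.norm_normal hs : (ℝ × ℝ) →L[ℝ] ℂ) (t, s) := by
  have hfst : HasFDerivAt Prod.fst (ContinuousLinearMap.fst ℝ ℝ ℝ) (t, s) := hasFDerivAt_fst
  have hγ := hasFDerivAt_comp_smulRight (x := (t, s)) h.hasDerivAt_curve hfst
  have hN := hasFDerivAt_comp_smulRight (x := (t, s)) h.hasDerivAt_normal hfst
  refine (hγ.sub (hasFDerivAt_snd.smul hN)).congr_fderiv ?_
  ext
  · simp [scaledFrameEquiv]
    ring
  · simp [scaledFrameEquiv]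

lemma IsFrenetAt.hasFDerivAt_tubularCoordinates {γ N : ℝ → ℂ} {k : ℝ} {τ σ : ℂ → ℝ} {z : ℂ}
    (h : IsFrenetAt γ N k (τ z)) (hz : 1 - σ z * k ≠ 0)
    (hτ : ContinuousAt τ z) (hσ : ContinuousAt σ z)
    (hinv : ∀ᶠ w in 𝓝 z, tubularMap γ N (τ w, σ w) = w) :
    HasFDerivAt τ ((1 / (1 - σ z * k)) • iprCLM (Complex.I * N (τ z))) z ∧
      HasFDerivAt σ (iprCLM (-N (τ z))) z :=
  have hτσ : HasFDerivAt (fun w => (τ w, σ w))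
      ((scaledFrameEquiv h.norm_normal hz).symm : ℂ →L[ℝ] ℝ × ℝ) z :=
    HasFDerivAt.of_local_left_inverse (hτ.prodMk hσ) (h.hasFDerivAt_tubularMap hz) hinv
  ⟨hτσ.fst, hτσ.snd⟩

theorem derivatives_in_tubular_neighborhood_general
    {K : Set ℝ} (hK : IsCompact K) {γ : ℝ → ℂ} (hγ : ContinuousOn γ K)
    {Γ : Set ℂ} (hΓ : Γ = γ '' K)
    {ν : ℂ → ℂ} {κ : ℂ → ℝ} {t₀ κ' : ℝ}
    (hfrenet : IsFrenetAt γ (ν ∘ γ) (κ (γ t₀)) t₀) (hκ' : HasDerivAt (κ ∘ γ) κ' t₀)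
    {d : ℂ → ℝ} (hd : ∀ w, d w = Metric.infDist w Γ) {p : ℂ → ℂ} {z : ℂ}
    (hp : ∀ᶠ w in 𝓝 z, p w ∈ Γ ∧ dist w (p w) = d w)
    (huniq : ∀ t ∈ K, dist z (γ t) = d z → t = t₀)
    (hnormal : ∀ᶠ w in 𝓝 z, w = p w - d w • ν (p w)) (hdκ : 1 - d z * κ (p z) ≠ 0) :
    HasFDerivAt d (iprCLM (-ν (p z))) z ∧
    HasFDerivAt p ((1 / (1 - d z * κ (p z))) • projCLM (Complex.I * ν (p z))) z ∧
    HasFDerivAt (ν ∘ p)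
      (κ (p z) • (1 / (1 - d z * κ (p z))) • projCLM (Complex.I * ν (p z))) z ∧
    HasFDerivAt (κ ∘ p)
      (iprCLM ((κ' / (1 - d z * κ (p z))) • (Complex.I * ν (p z)))) z := by
  subst hΓ
  obtain rfl : d = (Metric.infDist · (γ '' K)) := funext hd
  obtain ⟨τ, hτ, rfl, hpτ⟩ := exists_continuousAt_parameter_of_nearest hK hγ hp huniq
  have hpz : p z = γ (τ z) := hpτ.self_of_nhds
  have hinv : ∀ᶠ w in 𝓝 z, tubularMap γ (ν ∘ γ) (τ w, Metric.infDist w (γ '' K)) = w := by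
    filter_upwards [hpτ, hnormal] with w hpw hw
    rw [hpw] at hw
    exact hw.symm
  rw [hpz] at hdκ ⊢
  obtain ⟨hτ', hd'⟩ := hfrenet.hasFDerivAt_tubularCoordinates hdκ hτ
    (Metric.continuous_infDist_pt _).continuousAt hinv
  refine ⟨hd', ?_, ?_, ?_⟩
  · refine ((hasFDerivAt_comp_smulRight hfrenet.hasDerivAt_curve hτ').congr_of_eventuallyEq
      hpτ).congr_fderiv ?_
    exact ContinuousLinearMap.ext fun _ => by simp [-Complex.real_smul, projCLM, mul_smul]
  · refine ((hasFDerivAt_comp_smulRight hfrenet.hasDerivAt_normal hτ').congr_of_eventuallyEq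
      (hpτ.fun_comp ν)).congr_fderiv ?_
    exact ContinuousLinearMap.ext fun _ => by
      simp [-Complex.real_smul, projCLM, mul_smul, smul_comm (κ _)]
  · refine ((hasFDerivAt_comp_smulRight hκ' hτ').congr_of_eventuallyEq
      (hpτ.fun_comp κ)).congr_fderiv ?_
    exact ContinuousLinearMap.ext fun _ => by
      simp [-Complex.real_smul, iprCLM_smul, div_eq_inv_mul, mul_right_comm]

/-- Derivatives of the distance `d`, the nearest point projection `p`,
the normal `ν ∘ p` and the curvature `κ ∘ p` in the tubular neighborhood of `Γ`. -/
theorem derivatives_in_tubular_neighborhood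
    -- the C³ closed boundary curve Γ, parametrized by arc-length
    (L : ℝ) (hL : 0 < L) (γ : ℝ → ℂ)
    (hγC : ContDiff ℝ 3 γ) (hγper : Function.Periodic γ L)
    (hγunit : ∀ t, ‖deriv γ t‖ = 1) (hγinj : Set.InjOn γ (Set.Ico 0 L))
    (Γset : Set ℂ) (hΓ : Γset = Set.range γ)
    -- exterior unit normal ν, curvature κ and its derivative κ' along Γ
    (ν : ℂ → ℂ) (hν : ∀ t, ν (γ t) = -Complex.I * deriv γ t)
    (κ : ℂ → ℝ) (hκ : ∀ t, deriv (fun s => ν (γ s)) t = (κ (γ t) : ℂ) * deriv γ t)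
    (κ' : ℂ → ℝ) (hκ' : ∀ t, deriv (fun s => κ (γ s)) t = κ' (γ t))
    -- the domain Ω, with Γ a connected component of its boundary
    (Ω : Set ℂ) (hΩopen : IsOpen Ω) (hΩconn : IsConnected Ω)
    (hΓfr : Γset ⊆ frontier Ω)
    (hΓcomp : ∀ q ∈ Γset, connectedComponentIn (frontier Ω) q = Γset)
    -- the distance to Γ and the tubular neighborhood radius δ
    (d : ℂ → ℝ) (hd : ∀ z, d z = Metric.infDist z Γset)
    (δ : ℝ) (hδ : 0 < δ) (hκδ : ∀ q ∈ Γset, |κ q| < 1/δ)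
    -- the nearest point projection p on Ω_δ, unique nearest points
    (p : ℂ → ℂ)
    (hp : ∀ z ∈ Ω, d z ≤ δ →
      p z ∈ Γset ∧ dist z (p z) = d z ∧ ∀ q ∈ Γset, dist z q = d z → q = p z)
    -- ν points out of Ω: z = p(z) - d(z)·ν(p(z)) on Ω_δ
    (hin : ∀ z ∈ Ω, d z ≤ δ → z = p z - (d z : ℝ) • ν (p z)) :
    ∀ z ∈ Ω, 0 < d z → d z < δ →
      -- ∇d(z) = -ν
      HasFDerivAt d (iprCLM (-(ν (p z)))) z ∧
      -- Dp(z) = (1/(1 - dκ)) (iν)(iν)ᵀ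
      HasFDerivAt p ((1 / (1 - d z * κ (p z))) • projCLM (Complex.I * ν (p z))) z ∧
      -- D(ν∘p)(z) = κ · Dp(z)
      HasFDerivAt (fun w => ν (p w))
        (κ (p z) • ((1 / (1 - d z * κ (p z))) • projCLM (Complex.I * ν (p z)))) z ∧
      -- ∇(κ∘p)(z) = (κ'/(1 - dκ)) iν
      HasFDerivAt (fun w => κ (p w))
        (iprCLM ((κ' (p z) / (1 - d z * κ (p z))) • (Complex.I * ν (p z)))) z := by
  intro z hz _ hdδ
  subst hΓ
  obtain ⟨hpz, -, huniq⟩ := hp z hz hdδ.le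
  obtain ⟨t₀, ht₀⟩ := hpz
  have hγ' : Differentiable ℝ (deriv γ) :=
    (ContDiff.deriv' (n := 2) hγC).differentiable two_ne_zero
  have hfrenet : IsFrenetAt γ (ν ∘ γ) (κ (γ t₀)) t₀ :=
    isFrenetAt_of_deriv (hγC.differentiable three_ne_zero t₀) (hγ' t₀) (hγunit t₀) hν (hκ t₀)
  have hκγ : HasDerivAt (κ ∘ γ) (κ' (p z)) t₀ := by
    rw [← ht₀, ← hκ' t₀]
    exact (differentiable_curvature hγC (fun t => norm_ne_zero_iff.mp (by simp [hγunit])) hν hκ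
      t₀).hasDerivAt
  have hnear : ∀ᶠ w in 𝓝 z, w ∈ Ω ∧ d w ≤ δ := by
    have hdcont : Continuous d := (funext hd : d = _) ▸ Metric.continuous_infDist_pt _
    exact (hΩopen.eventually_mem hz).and ((hdcont.tendsto z).eventually_le_const hdδ)
  exact derivatives_in_tubular_neighborhood_general isCompact_Icc hγC.continuous.continuousOn
    (hγper.image_Icc hL (t₀ - L / 2)).symm hfrenet hκγ hd
    (hnear.mono fun w hw => ⟨(hp w hw.1 hw.2).1, (hp w hw.1 hw.2).2.1⟩)
    (fun t ht htz => eq_of_periodic_of_injOn_Ico hL hγper hγinj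
      (abs_lt.mpr ⟨by linarith [ht.1], by linarith [ht.2]⟩)
      ((huniq _ ⟨t, rfl⟩ htz).trans ht₀.symm))
    (hnear.mono fun w hw => hin w hw.1 hw.2)
    (one_sub_mul_ne_zero_of_abs_lt (hd z ▸ Metric.infDist_nonneg) hdδ.le (hκδ _ ⟨t₀, ht₀⟩))
end

section
/- Derivative of the scaling map: for 0 < r < δ and every z ∈ Ω with 0 < d(z) < δ, the map χ_r is differentiable at z with Dχ_r(z) = (r/δ)·ν νᵀ + ((δ - r·d(z)κ)/(δ(1 - d(z)κ)))·(iν)(iν)ᵀ, where ν = ν(p(z)) and κ = κ(p(z)); this matrix is invertible, r·(Dχ_r(z))⁻¹ = δ·ν νᵀ + (rδ(1 - d(z)κ)/(δ - r·d(z)κ))·(iν)(iν)ᵀ, and det Dχ_r(z) = r(δ - r·d(z)κ)/(δ²(1 - d(z)κ)). -/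
/-!
A point `w` near `z` is `γ t - s • ν (γ t)` with `γ t = p w` and `s = d w`. At `z` this
parametrisation has derivative `(a, b) ↦ (a (1 - d κ)) • iν - b • ν`, which has a left inverse
since `|d κ| < 1`. A continuous local inverse of a map whose derivative has a left inverse is
differentiable, so the inverse function theorem is not needed, only continuity of `w ↦ t` at `z`.
This is a compactness argument: with `t` taken in a period interval centred at the parameter `t₀`
of `p z`, each cluster point of `t` at `z` parametrises a nearest point of `z`, hence equals `t₀`.

It follows that `Dp(z) = (1 - d κ)⁻¹ (iν)(iν)ᵀ`, so that `Dχ_r(z)` is diagonal in the orthonormal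
basis `(ν, iν)`.
-/

open Filter InnerProductSpace Topology

section Diagonal

variable {ι 𝕜 E : Type*} [Fintype ι] [RCLike 𝕜] [NormedAddCommGroup E] [InnerProductSpace 𝕜 E]

/-- The operator `∑ i, a i • v i (v i)ᵀ`. If `v` is an orthonormal basis, it is the operator with
diagonal matrix `a` in that basis. -/
noncomputable def diagonalCLM (v : ι → E) (a : ι → 𝕜) : E →L[𝕜] E :=
  ∑ i, a i • rankOne 𝕜 (v i) (v i)

lemma diagonalCLM_apply_self {v : ι → E} (hv : Orthonormal 𝕜 v) (a : ι → 𝕜) (i : ι) :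
    diagonalCLM v a (v i) = a i • v i := by
  classical
  simp [diagonalCLM, orthonormal_iff_ite.1 hv]

lemma diagonalCLM_comp_diagonalCLM {v : ι → E} (hv : Orthonormal 𝕜 v) (a a' : ι → 𝕜) :
    (diagonalCLM v a).comp (diagonalCLM v a') = diagonalCLM v (a * a') := by
  ext x
  calc diagonalCLM v a (diagonalCLM v a' x)
      = ∑ i, (a' i * inner 𝕜 (v i) x) • diagonalCLM v a (v i) := by
        simp [diagonalCLM.eq_1 v a', smul_smul]
    _ = ∑ i, (a i * a' i * inner 𝕜 (v i) x) • v i := by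
        simp only [diagonalCLM_apply_self hv, smul_smul, mul_assoc, mul_left_comm (a _),
          mul_comm (inner 𝕜 _ x)]
    _ = diagonalCLM v (a * a') x := by
        simp [diagonalCLM, smul_smul]

lemma diagonalCLM_const (b : OrthonormalBasis ι 𝕜 E) (r : 𝕜) :
    diagonalCLM b (fun _ => r) = r • ContinuousLinearMap.id 𝕜 E := by
  rw [diagonalCLM, ← Finset.smul_sum, b.sum_rankOne_eq_id]

lemma diagonalCLM_comp_eq_smul_id (b : OrthonormalBasis ι 𝕜 E) {a a' : ι → 𝕜} {r : 𝕜}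
    (h : ∀ i, a i * a' i = r) :
    (diagonalCLM b a).comp (diagonalCLM b a') = r • ContinuousLinearMap.id 𝕜 E := by
  rw [diagonalCLM_comp_diagonalCLM b.orthonormal, ← diagonalCLM_const b]
  exact congrArg _ (funext h)

lemma det_diagonalCLM (b : OrthonormalBasis ι 𝕜 E) (a : ι → 𝕜) :
    LinearMap.det (diagonalCLM b a : E →ₗ[𝕜] E) = ∏ i, a i := by
  classical
  have hdiag : LinearMap.toMatrix b.toBasis b.toBasis (diagonalCLM b a : E →ₗ[𝕜] E) =
      Matrix.diagonal a := by
    ext i j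
    by_cases hij : i = j <;>
      simp [LinearMap.toMatrix_apply, diagonalCLM_apply_self b.orthonormal, hij]
  rw [← LinearMap.det_toMatrix b.toBasis, hdiag, Matrix.det_diagonal]

end Diagonal

lemma projCLM_eq_rankOne (e : ℂ) : projCLM e = rankOne ℝ e e := by
  ext
  simp [projCLM, iprCLM, Complex.inner, mul_comm]

lemma smul_projCLM_add_smul_projCLM (e e' : ℂ) (a a' : ℝ) :
    a • projCLM e + a' • projCLM e' = diagonalCLM ![e, e'] ![a, a'] := by
  simp [diagonalCLM, projCLM_eq_rankOne]

lemma exists_orthonormalBasis_eq_pair_I_mul {e : ℂ} (he : ‖e‖ = 1) :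
    ∃ b : OrthonormalBasis (Fin 2) ℝ ℂ, ⇑b = ![e, Complex.I * e] := by
  obtain ⟨c, rfl⟩ : ∃ c : Circle, (c : ℂ) = e := ⟨⟨e, mem_sphere_zero_iff_norm.2 he⟩, rfl⟩
  refine ⟨Complex.orthonormalBasisOneI.map (rotation c), ?_⟩
  ext i
  fin_cases i <;> simp [mul_comm]

lemma eq_of_periodic_of_abs_sub_lt {X : Type*} {f : ℝ → X} {c : ℝ} (hc : 0 < c)
    (hf : Function.Periodic f c) (hinj : Set.InjOn f (Set.Ico 0 c)) {x y : ℝ} (h : f x = f y)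
    (hxy : |x - y| < c) : x = y := by
  have hmod : ∀ s, f (toIcoMod hc 0 s) = f s := fun s => hf.sub_zsmul_eq _
  have hmem : ∀ s, toIcoMod hc 0 s ∈ Set.Ico 0 c := fun s => by
    simpa using toIcoMod_mem_Ico hc 0 s
  have hmodEq : x ≡ y [PMOD c] :=
    (toIcoMod_inj hc).1 (hinj (hmem x) (hmem y) (by rw [hmod, hmod, h]))
  have hself : ∀ s, min x y ≤ s → s ≤ max x y → toIcoMod hc (min x y) s = s := fun s hs hs' =>
    (toIcoMod_eq_self hc).2 ⟨hs, by linarith [max_sub_min_eq_abs' x y]⟩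
  rw [← hself x (min_le_left x y) (le_max_left x y), hmodEq.toIcoMod_eq_toIcoMod hc,
    hself y (min_le_right x y) (le_max_right x y)]

lemma tendsto_of_unique_nearest {T X : Type*} [TopologicalSpace T] [PseudoMetricSpace X]
    {γ : T → X} (hγ : Continuous γ) {K : Set T} (hK : IsCompact K) {t : X → T} {d : X → ℝ} {z : X}
    {t₀ : T} (hd : ContinuousAt d z) (htK : ∀ᶠ w in 𝓝 z, t w ∈ K)
    (ht : ∀ᶠ w in 𝓝 z, dist w (γ (t w)) = d w)
    (huniq : ∀ x ∈ K, dist z (γ x) = d z → x = t₀) : Tendsto t (𝓝 z) (𝓝 t₀) := by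
  refine hK.tendsto_nhds_of_unique_mapClusterPt htK fun x hx hcl => huniq x hx ?_
  obtain ⟨U, hU, hUx⟩ := mapClusterPt_iff_ultrafilter.1 hcl
  have hdist : Tendsto (fun w => dist w (γ (t w))) U (𝓝 (dist z (γ x))) :=
    Tendsto.dist hU ((hγ.tendsto x).comp hUx)
  exact tendsto_nhds_unique (hdist.congr' (ht.filter_mono hU)) (hd.mono_left hU)

lemma exists_continuousAt_parameter {X : Type*} [PseudoMetricSpace X] {L : ℝ} (hL : 0 < L)
    {γ : ℝ → X} (hγ : Continuous γ) (hper : Function.Periodic γ L)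
    (hinj : Set.InjOn γ (Set.Ico 0 L)) {d : X → ℝ} {p : X → X} {z : X} (hd : ContinuousAt d z)
    (hp : ∀ᶠ w in 𝓝 z, p w ∈ Set.range γ ∧ dist w (p w) = d w)
    (huniq : ∀ q ∈ Set.range γ, dist z q = d z → q = p z) :
    ∃ t : X → ℝ, ContinuousAt t z ∧ ∀ᶠ w in 𝓝 z, γ (t w) = p w := by
  obtain ⟨t₀, ht₀⟩ := hp.self_of_nhds.1
  let t : X → ℝ := fun w => toIcoMod hL (t₀ - L / 2) (Function.invFun γ (p w))
  have hγt : ∀ w, p w ∈ Set.range γ → γ (t w) = p w := fun w hw =>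
    (hper.sub_zsmul_eq _).trans (Function.invFun_eq hw)
  have hmem : ∀ w, t w ∈ Set.Icc (t₀ - L / 2) (t₀ + L / 2) := fun w => by
    obtain ⟨hl, hr⟩ : t w ∈ Set.Ico _ _ := toIcoMod_mem_Ico hL (t₀ - L / 2) _
    exact ⟨hl, by linarith⟩
  have heq : ∀ x ∈ Set.Icc (t₀ - L / 2) (t₀ + L / 2), γ x = p z → x = t₀ := fun x hx h =>
    eq_of_periodic_of_abs_sub_lt hL hper hinj (h.trans ht₀.symm)
      (by rw [abs_lt]; constructor <;> linarith [hx.1, hx.2])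
  have ht : Tendsto t (𝓝 z) (𝓝 t₀) :=
    tendsto_of_unique_nearest hγ isCompact_Icc hd (.of_forall hmem)
      (hp.mono fun w hw => by rw [hγt w hw.1, hw.2])
      fun x hx h => heq x hx (huniq _ (Set.mem_range_self x) h)
  refine ⟨t, ?_, hp.mono fun w hw => hγt w hw.1⟩
  rwa [ContinuousAt, heq _ (hmem z) (hγt z hp.self_of_nhds.1)]

section NearestPoint

variable {E : Type*} [NormedAddCommGroup E] [InnerProductSpace ℝ E]

lemma hasFDerivAt_comp_tubularParameter {γ n : ℝ → E} {t s : E → ℝ} {z e τ : E} {k : ℝ}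
    (he : ‖e‖ = 1) (hτ : ‖τ‖ = 1) (heτ : inner ℝ e τ = 0) (hn : n (t z) = e)
    (hγ' : HasDerivAt γ τ (t z)) (hn' : HasDerivAt n (k • τ) (t z)) (hk : 1 - s z * k ≠ 0)
    (ht : ContinuousAt t z) (hs : ContinuousAt s z)
    (hts : ∀ᶠ w in 𝓝 z, γ (t w) - s w • n (t w) = w) :
    HasFDerivAt (γ ∘ t) ((1 - s z * k)⁻¹ • rankOne ℝ τ τ) z := by
  have hF : HasFDerivAt (fun x : ℝ × ℝ => γ x.1 - x.2 • n x.1)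
      ((ContinuousLinearMap.fst ℝ ℝ ℝ).smulRight ((1 - s z * k) • τ) -
        (ContinuousLinearMap.snd ℝ ℝ ℝ).smulRight e) (t z, s z) := by
    have hγfst := HasFDerivAt.comp (t z, s z) (f := Prod.fst) hγ'.hasFDerivAt hasFDerivAt_fst
    have hnfst := HasFDerivAt.comp (t z, s z) (f := Prod.fst) hn'.hasFDerivAt hasFDerivAt_fst
    refine (hγfst.sub (hasFDerivAt_snd.smul hnfst)).congr_fderiv ?_
    ext <;> simp [hn, sub_smul, mul_smul]
  have hleft : Function.LeftInverse
      (((1 - s z * k)⁻¹ • innerSL ℝ τ).prod (-innerSL ℝ e))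
      ((ContinuousLinearMap.fst ℝ ℝ ℝ).smulRight ((1 - s z * k) • τ) -
        (ContinuousLinearMap.snd ℝ ℝ ℝ).smulRight e) := fun x => by
    have hτe : inner ℝ τ e = 0 := real_inner_comm e τ ▸ heτ
    ext <;> simp [inner_sub_right, inner_smul_right, he, hτ, heτ, hτe, field]
  have hts' : HasFDerivAt (fun w => (t w, s w)) _ z :=
    hF.of_comp_of_leftInverse (g := fun w => (t w, s w)) (ht.prodMk hs) (hasFDerivAt_id z) hts hleft
  refine (hγ'.hasFDerivAt.comp z hts'.fst).congr_fderiv ?_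
  ext v
  simp [smul_smul]

lemma hasFDerivAt_nearestPoint {L : ℝ} (hL : 0 < L) {γ : ℝ → E} (hγ : Continuous γ)
    (hper : Function.Periodic γ L) (hinj : Set.InjOn γ (Set.Ico 0 L)) {ν p : E → E} {d : E → ℝ}
    {z τ : E} {k : ℝ} (hν : ‖ν (p z)‖ = 1) (hτ : ‖τ‖ = 1) (hντ : inner ℝ (ν (p z)) τ = 0)
    (hγ' : ∀ t, γ t = p z → HasDerivAt γ τ t)
    (hν' : ∀ t, γ t = p z → HasDerivAt (ν ∘ γ) (k • τ) t) (hk : 1 - d z * k ≠ 0)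
    (hd : ContinuousAt d z)
    (hp : ∀ᶠ w in 𝓝 z, p w ∈ Set.range γ ∧ dist w (p w) = d w)
    (hpd : ∀ᶠ w in 𝓝 z, p w - d w • ν (p w) = w)
    (huniq : ∀ q ∈ Set.range γ, dist z q = d z → q = p z) :
    HasFDerivAt p ((1 - d z * k)⁻¹ • rankOne ℝ τ τ) z := by
  obtain ⟨t, htc, ht⟩ := exists_continuousAt_parameter hL hγ hper hinj hd hp huniq
  have htz : γ (t z) = p z := ht.self_of_nhds
  have hγt := hasFDerivAt_comp_tubularParameter hν hτ hντ (congrArg ν htz) (hγ' _ htz)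
    (hν' _ htz) hk htc hd (by
      filter_upwards [ht, hpd] with w hw hwd
      rwa [Function.comp_apply, hw])
  exact hγt.congr_of_eventuallyEq (ht.mono fun _ h => h.symm)

lemma hasFDerivAt_smul_add_smul (b : OrthonormalBasis (Fin 2) ℝ E) {p : E → E} {z : E} {m : ℝ}
    (hp : HasFDerivAt p (m • rankOne ℝ (b 1) (b 1)) z) (c : ℝ) :
    HasFDerivAt (fun w => c • w + (1 - c) • p w) (diagonalCLM b ![c, c + (1 - c) * m]) z := by
  refine (((hasFDerivAt_id z).const_smul c).add (hp.const_smul (1 - c))).congr_fderiv ?_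
  rw [← b.sum_rankOne_eq_id]
  simp only [diagonalCLM, Fin.sum_univ_two, Matrix.cons_val_zero, Matrix.cons_val_one]
  module

end NearestPoint

lemma hasFDerivAt_nearestPoint_of_normal {L : ℝ} (hL : 0 < L) {γ : ℝ → ℂ}
    (hγ : Differentiable ℝ γ) (hγ' : Differentiable ℝ (deriv γ)) (hγper : Function.Periodic γ L)
    (hγunit : ∀ t, ‖deriv γ t‖ = 1) (hγinj : Set.InjOn γ (Set.Ico 0 L)) {ν : ℂ → ℂ}
    (hν : ∀ t, ν (γ t) = -Complex.I * deriv γ t) {κ : ℂ → ℝ}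
    (hκ : ∀ t, deriv (fun s => ν (γ s)) t = (κ (γ t) : ℂ) * deriv γ t) {p : ℂ → ℂ} {d : ℂ → ℝ}
    {z : ℂ} (hk : 1 - d z * κ (p z) ≠ 0) (hd : ContinuousAt d z)
    (hp : ∀ᶠ w in 𝓝 z, p w ∈ Set.range γ ∧ dist w (p w) = d w)
    (hpd : ∀ᶠ w in 𝓝 z, p w - d w • ν (p w) = w)
    (huniq : ∀ q ∈ Set.range γ, dist z q = d z → q = p z) :
    HasFDerivAt p ((1 - d z * κ (p z))⁻¹ •
      rankOne ℝ (Complex.I * ν (p z)) (Complex.I * ν (p z))) z := by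
  have hderiv : ∀ t, deriv γ t = Complex.I * ν (γ t) := fun t => by
    rw [hν, ← mul_assoc]
    simp
  have hνγ : Differentiable ℝ (ν ∘ γ) := by
    rw [show ν ∘ γ = fun t => -Complex.I * deriv γ t from funext hν]
    exact hγ'.const_mul _
  obtain ⟨t₀, ht₀⟩ := hp.self_of_nhds.1
  have hunit : ‖ν (p z)‖ = 1 := by simp [← ht₀, hν, hγunit]
  refine hasFDerivAt_nearestPoint hL hγ.continuous hγper hγinj hunit (by simp [hunit])
    ?_ (fun t ht => ?_) (fun t ht => ?_) hk hd hp hpd huniq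
  · simp [Complex.inner, mul_comm]
  · rw [← ht, ← hderiv]
    exact (hγ t).hasDerivAt
  · rw [← ht, ← hderiv, Complex.real_smul, ← hκ]
    exact (hνγ t).hasDerivAt

lemma sub_mul_ne_zero_of_abs_lt_one {δ r x : ℝ} (hδ : 0 < δ) (hr : |r| ≤ δ) (hx : |x| < 1) :
    δ - r * x ≠ 0 := by
  have hrx : |r * x| < δ := calc
    |r * x| = |r| * |x| := abs_mul r x
    _ ≤ δ * |x| := by gcongr
    _ < δ := mul_lt_of_lt_one_right hδ hx
  linarith [(abs_lt.1 hrx).2]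

theorem derivative_of_scaling_map_general
    {L : ℝ} (hL : 0 < L) {γ : ℝ → ℂ} (hγ : Differentiable ℝ γ) (hγ' : Differentiable ℝ (deriv γ))
    (hγper : Function.Periodic γ L) (hγunit : ∀ t, ‖deriv γ t‖ = 1)
    (hγinj : Set.InjOn γ (Set.Ico 0 L))
    {ν : ℂ → ℂ} (hν : ∀ t, ν (γ t) = -Complex.I * deriv γ t)
    {κ : ℂ → ℝ} (hκ : ∀ t, deriv (fun s => ν (γ s)) t = (κ (γ t) : ℂ) * deriv γ t)
    {Ω : Set ℂ} (hΩ : IsOpen Ω)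
    {d : ℂ → ℝ} (hd : ∀ z, d z = Metric.infDist z (Set.range γ))
    {δ : ℝ} (hδ : 0 < δ) (hκδ : ∀ q ∈ Set.range γ, |κ q| < 1 / δ)
    {p : ℂ → ℂ}
    (hp : ∀ z ∈ Ω, d z ≤ δ →
      p z ∈ Set.range γ ∧ dist z (p z) = d z ∧ ∀ q ∈ Set.range γ, dist z q = d z → q = p z)
    (hin : ∀ z ∈ Ω, d z ≤ δ → z = p z - d z • ν (p z))
    {r : ℝ} (hr : |r| ≤ δ) {z : ℂ} (hz : z ∈ Ω) (hdz : d z < δ) :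
    let e := ![ν (p z), Complex.I * ν (p z)]
    let D := diagonalCLM e ![r / δ, (δ - r * d z * κ (p z)) / (δ * (1 - d z * κ (p z)))]
    let R := diagonalCLM e ![δ, (r * δ * (1 - d z * κ (p z))) / (δ - r * d z * κ (p z))]
    HasFDerivAt (fun w => (r / δ) • w + (1 - r / δ) • p w) D z ∧
      D.comp R = r • ContinuousLinearMap.id ℝ ℂ ∧
      R.comp D = r • ContinuousLinearMap.id ℝ ℂ ∧
      LinearMap.det (D : ℂ →ₗ[ℝ] ℂ) =
        r * (δ - r * d z * κ (p z)) / (δ ^ 2 * (1 - d z * κ (p z))) := by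
  have hdcont : Continuous d := by
    simpa only [← funext hd] using Metric.continuous_infDist_pt (Set.range γ)
  have hnear : ∀ᶠ w in 𝓝 z, w ∈ Ω ∧ d w ≤ δ :=
    (hΩ.eventually_mem hz).and (hdcont.continuousAt.eventually_le_const hdz)
  obtain ⟨⟨t₀, ht₀⟩, -, huniq⟩ := hp z hz hdz.le
  have hdκ : |d z * κ (p z)| < 1 := by
    have hκz := (lt_div_iff₀ hδ).1 (hκδ _ ⟨t₀, ht₀⟩)
    rw [abs_mul, abs_of_nonneg (hd z ▸ Metric.infDist_nonneg)]
    nlinarith [abs_nonneg (κ (p z))]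
  have hk : 1 - d z * κ (p z) ≠ 0 := by
    simpa using sub_mul_ne_zero_of_abs_lt_one one_pos (abs_one (α := ℝ)).le hdκ
  have hrk : δ - r * d z * κ (p z) ≠ 0 := by
    simpa [mul_assoc] using sub_mul_ne_zero_of_abs_lt_one hδ hr hdκ
  have hDp := hasFDerivAt_nearestPoint_of_normal hL hγ hγ' hγper hγunit hγinj hν hκ hk
    hdcont.continuousAt (hnear.mono fun w hw => (hp w hw.1 hw.2).imp_right And.left)
    (hnear.mono fun w hw => (hin w hw.1 hw.2).symm) huniq
  obtain ⟨b, hb⟩ : ∃ b : OrthonormalBasis (Fin 2) ℝ ℂ, ⇑b = ![ν (p z), Complex.I * ν (p z)] :=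
    exists_orthonormalBasis_eq_pair_I_mul (by simp [← ht₀, hν, hγunit])
  have hDR : ∀ i, ![r / δ, (δ - r * d z * κ (p z)) / (δ * (1 - d z * κ (p z)))] i *
      ![δ, (r * δ * (1 - d z * κ (p z))) / (δ - r * d z * κ (p z))] i = r := by
    rw [Fin.forall_fin_two]
    constructor <;> simp [field]
  intro e D R
  simp only [D, R, e, ← hb]
  refine ⟨?_, diagonalCLM_comp_eq_smul_id b hDR,
    diagonalCLM_comp_eq_smul_id b fun i => (mul_comm _ _).trans (hDR i), ?_⟩
  · have hcoef : (δ - r * d z * κ (p z)) / (δ * (1 - d z * κ (p z))) =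
        r / δ + (1 - r / δ) * (1 - d z * κ (p z))⁻¹ := by
      field_simp
      ring
    rw [hcoef]
    exact hasFDerivAt_smul_add_smul b (by simpa [hb] using hDp) _
  · rw [det_diagonalCLM, Fin.prod_univ_two]
    simp [field]

/-- Derivative of the scaling map `χ_r(z) = (r/δ)z + (1-r/δ)p(z)`,
its inverse (in the form `Dχ_r(z) ∘ E = r·id = E ∘ Dχ_r(z)` with
`E = δ ννᵀ + (rδ(1-dκ)/(δ-rdκ)) (iν)(iν)ᵀ`, i.e. `E = r (Dχ_r(z))⁻¹`) and its determinant. -/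
theorem derivative_of_scaling_map
    (L : ℝ) (hL : 0 < L) (γ : ℝ → ℂ)
    (hγC : ContDiff ℝ 3 γ) (hγper : Function.Periodic γ L)
    (hγunit : ∀ t, ‖deriv γ t‖ = 1) (hγinj : Set.InjOn γ (Set.Ico 0 L))
    (Γset : Set ℂ) (hΓ : Γset = Set.range γ)
    (ν : ℂ → ℂ) (hν : ∀ t, ν (γ t) = -Complex.I * deriv γ t)
    (κ : ℂ → ℝ) (hκ : ∀ t, deriv (fun s => ν (γ s)) t = (κ (γ t) : ℂ) * deriv γ t)
    (Ω : Set ℂ) (hΩopen : IsOpen Ω) (hΩconn : IsConnected Ω)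
    (hΓfr : Γset ⊆ frontier Ω)
    (hΓcomp : ∀ q ∈ Γset, connectedComponentIn (frontier Ω) q = Γset)
    (d : ℂ → ℝ) (hd : ∀ z, d z = Metric.infDist z Γset)
    (δ : ℝ) (hδ : 0 < δ) (hκδ : ∀ q ∈ Γset, |κ q| < 1/δ)
    (p : ℂ → ℂ)
    (hp : ∀ z ∈ Ω, d z ≤ δ →
      p z ∈ Γset ∧ dist z (p z) = d z ∧ ∀ q ∈ Γset, dist z q = d z → q = p z)
    (hin : ∀ z ∈ Ω, d z ≤ δ → z = p z - (d z : ℝ) • ν (p z)) :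
    ∀ r, 0 < r → r < δ → ∀ z ∈ Ω, 0 < d z → d z < δ →
      -- Dχ_r(z) = (r/δ) ννᵀ + ((δ - r d κ)/(δ(1 - d κ))) (iν)(iν)ᵀ
      HasFDerivAt (fun w => (r/δ) • w + (1 - r/δ) • p w)
        ((r/δ) • projCLM (ν (p z)) +
          ((δ - r * d z * κ (p z)) / (δ * (1 - d z * κ (p z)))) •
            projCLM (Complex.I * ν (p z))) z ∧
      -- invertibility and the formula r·(Dχ_r(z))⁻¹ = δ ννᵀ + (rδ(1-dκ)/(δ-rdκ)) (iν)(iν)ᵀ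
      (((r/δ) • projCLM (ν (p z)) +
          ((δ - r * d z * κ (p z)) / (δ * (1 - d z * κ (p z)))) •
            projCLM (Complex.I * ν (p z))).comp
        (δ • projCLM (ν (p z)) +
          ((r * δ * (1 - d z * κ (p z))) / (δ - r * d z * κ (p z))) •
            projCLM (Complex.I * ν (p z)))
        = r • ContinuousLinearMap.id ℝ ℂ) ∧
      ((δ • projCLM (ν (p z)) +
          ((r * δ * (1 - d z * κ (p z))) / (δ - r * d z * κ (p z))) •
            projCLM (Complex.I * ν (p z))).comp
        ((r/δ) • projCLM (ν (p z)) +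
          ((δ - r * d z * κ (p z)) / (δ * (1 - d z * κ (p z)))) •
            projCLM (Complex.I * ν (p z)))
        = r • ContinuousLinearMap.id ℝ ℂ) ∧
      -- det Dχ_r(z) = r(δ - r d κ)/(δ²(1 - d κ))
      LinearMap.det
        (((r/δ) • projCLM (ν (p z)) +
          ((δ - r * d z * κ (p z)) / (δ * (1 - d z * κ (p z)))) •
            projCLM (Complex.I * ν (p z))) : ℂ →ₗ[ℝ] ℂ)
        = r * (δ - r * d z * κ (p z)) / (δ^2 * (1 - d z * κ (p z))) := by
  subst hΓ
  intro r hr hrδ z hz _ hdzδ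
  simpa only [← ContinuousLinearMap.toLinearMap_smul, ← ContinuousLinearMap.toLinearMap_add,
    smul_projCLM_add_smul_projCLM] using
    derivative_of_scaling_map_general hL (hγC.differentiable (by norm_num))
      ((hγC.of_le (by norm_num)).differentiable_deriv_two) hγper hγunit hγinj hν hκ hΩopen hd hδ hκδ
      hp hin (abs_le.2 ⟨by linarith, hrδ.le⟩) hz hdzδ
end

section
/- Solutions of the limit system are periodic: let u : ℝ → ℂ be a C¹ solution of u'(t) = (1 - d(u(t))·κ(p(u(t))))·(δ/d(u(t)))·i·ν(p(u(t))) with 0 < d(u(t)) ≤ δ for all t. Then the distance d(u(t)) is constant, equal to some ε ∈ (0, δ], and u is periodic with minimal period ε·L/δ. -/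
/-!
Let `q ∈ Γ` be nearest to `u t`. The distance from `u s` to `q` bounds the distance from `u s` to
`Γ` from above, with equality at `s = t`, and its square has derivative zero there because the
velocity is tangent to `Γ` at `q` while `u t - q` is normal. A continuous function touched from
above in this way at every point is constant, so `u` stays at a constant distance `ε` from `Γ`; no
differentiability of the distance or of the nearest point is needed.

The nearest point moves continuously, so it equals `γ ∘ θ` for a continuous phase `θ : ℝ → ℝ`, and
`u = G ∘ θ` with `G = γ - ε ν ∘ γ`. As `G' = (1 - ε κ) γ'` does not vanish, the equation for `u`
reads `θ' = δ / ε`. Hence `θ` is affine and `u` goes once around in time `ε L / δ`.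
-/

open Set Filter Topology Metric
open scoped RealInnerProductSpace

section TouchingFromAbove

theorem antitone_of_touching_above {f : ℝ → ℝ} (hf : Continuous f)
    (h : ∀ t, ∃ g : ℝ → ℝ, ∃ g' ≤ 0, HasDerivWithinAt g g' (Ioi t) t ∧ g t = f t ∧
      f ≤ᶠ[𝓝[>] t] g) :
    Antitone f := by
  intro a b hab
  refine image_le_of_liminf_slope_right_le_deriv_boundary (B := fun _ => f a) (B' := fun _ => 0)
    hf.continuousOn le_rfl continuousOn_const (fun _ _ => hasDerivWithinAt_const _ _ _) ?_
    ⟨hab, le_rfl⟩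
  intro t _ r hr
  obtain ⟨g, g', hg', hg, hgt, hfg⟩ := h t
  have slope_lt : ∀ᶠ s in 𝓝[>] t, slope g t s < r :=
    ((hasDerivWithinAt_iff_tendsto_slope' self_notMem_Ioi).1 hg).eventually_lt_const
      (hg'.trans_lt hr)
  refine Eventually.frequently ?_
  filter_upwards [slope_lt, hfg, self_mem_nhdsWithin] with s hs hfgs hts
  refine lt_of_le_of_lt ?_ hs
  have : 0 < s - t := sub_pos.2 hts
  rw [slope_def_field, slope_def_field, hgt]
  gcongr

theorem eq_of_touching_above {f : ℝ → ℝ} (hf : Continuous f)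
    (h : ∀ t, ∃ g : ℝ → ℝ, HasDerivAt g 0 t ∧ g t = f t ∧ f ≤ᶠ[𝓝 t] g) (a b : ℝ) :
    f a = f b := by
  have anti : Antitone f := antitone_of_touching_above hf fun t => by
    obtain ⟨g, hg, hgt, hfg⟩ := h t
    exact ⟨g, 0, le_rfl, hg.hasDerivWithinAt, hgt, hfg.filter_mono nhdsWithin_le_nhds⟩
  have anti_neg : Antitone fun t => f (-t) :=
    antitone_of_touching_above (hf.comp continuous_neg) fun t => by
      obtain ⟨g, hg, hgt, hfg⟩ := h (-t)
      have hg_neg : HasDerivAt (fun s => g (-s)) 0 t := by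
        simpa [Function.comp_def] using hg.comp t (hasDerivAt_neg t)
      exact ⟨fun s => g (-s), 0, le_rfl, hg_neg.hasDerivWithinAt, hgt,
        ((continuous_neg.tendsto t).eventually hfg).filter_mono nhdsWithin_le_nhds⟩
  have eq_of_le : ∀ {x y : ℝ}, x ≤ y → f x = f y := fun {x y} hxy =>
    le_antisymm (by simpa using anti_neg (neg_le_neg hxy)) (anti hxy)
  exact (le_total a b).elim eq_of_le fun hba => (eq_of_le hba).symm

end TouchingFromAbove

section Calculus

variable {𝕜 E : Type*} [NormedAddCommGroup E]

theorem hasDerivAt_of_comp [NontriviallyNormedField 𝕜] [NormedSpace 𝕜 E] [SeparatingDual 𝕜 E]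
    {G : 𝕜 → E} {θ : 𝕜 → 𝕜} {v : E} {c t : 𝕜} (hv : v ≠ 0) (hG : HasDerivAt G v (θ t))
    (hθ : ContinuousAt θ t) (hcomp : HasDerivAt (fun s => G (θ s)) (c • v) t) :
    HasDerivAt θ c t := by
  obtain ⟨φ, hφ⟩ := SeparatingDual.exists_eq_one (R := 𝕜) hv
  set g : 𝕜 → 𝕜 := fun x => φ (G x)
  have hg : HasDerivAt g 1 (θ t) :=
    (φ.hasFDerivAt.comp_hasDerivAt (θ t) hG).congr_deriv hφ
  have hgθ : HasDerivAt (fun s => g (θ s)) c t :=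
    (φ.hasFDerivAt.comp_hasDerivAt t hcomp).congr_deriv (by simp [hφ])
  have dslope_tendsto : Tendsto (fun s => dslope g (θ t) (θ s)) (𝓝[≠] t) (𝓝 1) := by
    have hcont := (continuousAt_dslope_same.2 hg.differentiableAt).comp (f := θ) hθ
    simpa only [Function.comp_def, dslope_same, hg.deriv] using
      hcont.tendsto.mono_left nhdsWithin_le_nhds
  rw [hasDerivAt_iff_tendsto_slope] at hgθ ⊢
  have quotient_tendsto := hgθ.div dslope_tendsto one_ne_zero
  rw [div_one] at quotient_tendsto
  refine quotient_tendsto.congr' ?_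
  filter_upwards [dslope_tendsto.eventually_ne one_ne_zero] with s hs
  have hslope : (θ s - θ t) * dslope g (θ t) (θ s) = g (θ s) - g (θ t) :=
    sub_smul_dslope g (θ t) (θ s)
  simp only [Pi.div_apply, slope_def_field, ← hslope]
  field_simp

theorem eq_add_smul_of_hasDerivAt_const [RCLike 𝕜] [NormedSpace 𝕜 E] {f : 𝕜 → E} {v : E}
    (hf : ∀ t, HasDerivAt f v t) (t : 𝕜) : f t = f 0 + t • v := by
  have hline : ∀ t : 𝕜, HasDerivAt (fun t : 𝕜 => f 0 + t • v) v t := fun t => by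
    simpa using ((hasDerivAt_id t).smul_const v).const_add (f 0)
  refine congrFun (eq_of_fderiv_eq (fun t => (hf t).differentiableAt)
    (fun t => (hline t).differentiableAt) (fun t => ?_) 0 (by simp)) t
  rw [(hf t).hasFDerivAt.fderiv, (hline t).hasFDerivAt.fderiv]

end Calculus

section NearestPoint

variable {A X : Type*}

theorem continuous_of_isClosed_graph [TopologicalSpace A] [TopologicalSpace X] [CompactSpace X]
    {f : A → X} (hf : IsClosed {z : A × X | f z.1 = z.2}) : Continuous f := by
  refine continuous_iff_isClosed.2 fun s hs => ?_
  have preimage_eq : f ⁻¹' s = Prod.fst '' ({z : A × X | f z.1 = z.2} ∩ Prod.snd ⁻¹' s) := by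
    ext
    simp
  rw [preimage_eq]
  exact isClosedMap_fst_of_compactSpace _ (hf.inter (hs.preimage continuous_snd))

/-- `q` is a point of `K` at minimal distance from `z`, and the only one; this is the relation
`q = p(z)` for the nearest-point projection `p` onto `K`. -/
structure IsUniqueNearestPoint [PseudoMetricSpace X] (K : Set X) (z q : X) : Prop where
  mem : q ∈ K
  dist_eq : dist z q = infDist z K
  eq_of_dist_eq : ∀ x ∈ K, dist z x = infDist z K → x = q

theorem IsUniqueNearestPoint.continuous [TopologicalSpace A] [PseudoMetricSpace X] {K : Set X}
    (hK : IsCompact K) {u q : A → X} (hu : Continuous u)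
    (hq : ∀ a, IsUniqueNearestPoint K (u a) (q a)) : Continuous q := by
  have : CompactSpace K := isCompact_iff_compactSpace.1 hK
  let qK : A → K := fun a => ⟨q a, (hq a).mem⟩
  have graph_eq : {z : A × K | qK z.1 = z.2} = {z | dist (u z.1) z.2 = infDist (u z.1) K} := by
    ext ⟨a, x⟩
    constructor
    · intro h
      rw [← show qK a = x from h]
      exact (hq a).dist_eq
    · exact fun h => Subtype.ext ((hq a).eq_of_dist_eq x x.2 h).symm
  have hqK : Continuous qK := continuous_of_isClosed_graph <| by
    rw [graph_eq]
    exact isClosed_eq (by fun_prop) ((continuous_infDist_pt K).comp (by fun_prop))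
  exact continuous_subtype_val.comp hqK

theorem infDist_eq_of_inner_velocity_eq_zero {E : Type*} [NormedAddCommGroup E]
    [InnerProductSpace ℝ E] {K : Set E} {u u' q : ℝ → E} (hu : ∀ t, HasDerivAt u (u' t) t)
    (hq : ∀ t, q t ∈ K) (hdist : ∀ t, dist (u t) (q t) = infDist (u t) K)
    (horth : ∀ t, ⟪u t - q t, u' t⟫ = 0) (a b : ℝ) : infDist (u a) K = infDist (u b) K := by
  have hcont : Continuous u := continuous_iff_continuousAt.2 fun t => (hu t).continuousAt
  -- squaring makes the touching function differentiable also where the distance vanishes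
  have sq_eq : infDist (u a) K ^ 2 = infDist (u b) K ^ 2 := by
    refine eq_of_touching_above (f := fun t => infDist (u t) K ^ 2)
      (((continuous_infDist_pt K).comp hcont).pow 2) (fun t => ?_) a b
    refine ⟨fun s => dist (u s) (q t) ^ 2, ?_, congrArg (· ^ 2) (hdist t),
      Eventually.of_forall fun s =>
        pow_le_pow_left₀ infDist_nonneg (infDist_le_dist_of_mem (hq t)) 2⟩
    simpa [dist_eq_norm, horth t] using ((hu t).sub_const (q t)).norm_sq
  exact (pow_left_inj₀ infDist_nonneg infDist_nonneg two_ne_zero).1 sq_eq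

end NearestPoint

section SimpleClosedCurve

/-- `γ` is a continuous parametrization with period `L` of a simple closed curve, run through
exactly once by `[0, L)`. -/
structure IsSimpleClosedCurve {X : Type*} [TopologicalSpace X] (γ : ℝ → X) (L : ℝ) : Prop where
  pos : 0 < L
  continuous : Continuous γ
  periodic : Function.Periodic γ L
  injOn : InjOn γ (Ico 0 L)

namespace IsSimpleClosedCurve

variable {X : Type*} [TopologicalSpace X] {γ : ℝ → X} {L : ℝ}

theorem continuous_lift (hγ : IsSimpleClosedCurve γ L) :
    Continuous (hγ.periodic.lift : AddCircle L → X) :=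
  continuous_coinduced_dom.2 hγ.continuous

theorem injective_lift (hγ : IsSimpleClosedCurve γ L) :
    Function.Injective (hγ.periodic.lift : AddCircle L → X) := by
  have : Fact (0 < L) := ⟨hγ.pos⟩
  intro x y hxy
  obtain ⟨a, ha, rfl⟩ := AddCircle.eq_coe_Ico x
  obtain ⟨b, hb, rfl⟩ := AddCircle.eq_coe_Ico y
  exact congrArg _ (hγ.injOn ha hb hxy)

theorem range_lift (hγ : IsSimpleClosedCurve γ L) :
    range (hγ.periodic.lift : AddCircle L → X) = range γ :=
  (QuotientAddGroup.mk_surjective.range_comp _).symm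

theorem isCompact_range (hγ : IsSimpleClosedCurve γ L) : IsCompact (range γ) := by
  have : Fact (0 < L) := ⟨hγ.pos⟩
  rw [← hγ.range_lift]
  exact _root_.isCompact_range hγ.continuous_lift

theorem exists_int_mul_eq_sub (hγ : IsSimpleClosedCurve γ L) {a b : ℝ} (hab : γ a = γ b) :
    ∃ n : ℤ, n * L = a - b := by
  have hcoe : ((a - b : ℝ) : AddCircle L) = 0 := by
    rw [AddCircle.coe_sub, sub_eq_zero]
    exact hγ.injective_lift hab
  simpa using (AddCircle.coe_eq_zero_iff L).1 hcoe

theorem exists_continuous_phase [T2Space X] (hγ : IsSimpleClosedCurve γ L) {A : Type*}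
    [TopologicalSpace A] [SimplyConnectedSpace A] [LocallyPathConnectedSpace A] {q : A → X}
    (hq : Continuous q) (hmem : ∀ a, q a ∈ range γ) :
    ∃ θ : A → ℝ, Continuous θ ∧ ∀ a, γ (θ a) = q a := by
  have : Fact (0 < L) := ⟨hγ.pos⟩
  choose x hx using hmem
  have hc : Continuous fun a => (x a : AddCircle L) := by
    refine (hγ.continuous_lift.isClosedEmbedding hγ.injective_lift).continuous_iff.2 ?_
    exact hq.congr fun a => (hx a).symm
  obtain ⟨a₀⟩ := (inferInstance : Nonempty A)
  obtain ⟨θ, ⟨-, hθ⟩, -⟩ := (AddCircle.isCoveringMap_coe L).existsUnique_continuousMap_lifts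
    ⟨_, hc⟩ a₀ (x a₀) rfl
  refine ⟨θ, θ.continuous, fun a => ?_⟩
  rw [← hx a]
  exact congrArg hγ.periodic.lift (congrFun hθ a)

theorem isLeast_period_comp_affine (hγ : IsSimpleClosedCurve γ L) (a : ℝ) {c : ℝ} (hc : 0 < c) :
    IsLeast {T | 0 < T ∧ Function.Periodic (fun t => γ (a + t * c)) T} (L / c) := by
  refine ⟨⟨div_pos hγ.pos hc, (hγ.periodic.const_add a).mul_const' c⟩, fun T ⟨hT, hper⟩ => ?_⟩
  obtain ⟨n, hn⟩ := hγ.exists_int_mul_eq_sub (hper 0)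
  rw [zero_add, zero_mul, add_zero, add_sub_cancel_left] at hn
  have hn_pos : (0 : ℝ) < n := pos_of_mul_pos_left (hn ▸ mul_pos hT hc) hγ.pos.le
  have hn_one : (1 : ℝ) ≤ n := by exact_mod_cast Int.cast_pos.1 hn_pos
  rw [div_le_iff₀ hc, ← hn]
  exact le_mul_of_one_le_left hγ.pos.le hn_one

end IsSimpleClosedCurve

end SimpleClosedCurve

section LimitSystem

variable {E : Type*} [NormedAddCommGroup E]

/-- The point obtained from `x` by moving back a length `r` along the normal field `ν`; for a unit
normal field of a curve `γ`, composing it with `γ` gives the parallel curve at distance `r`. -/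
def inwardOffset [NormedSpace ℝ E] (ν : E → E) (r : ℝ) (x : E) : E := x - r • ν x

theorem hasDerivAt_inwardOffset_comp [NormedSpace ℝ E] {γ : ℝ → E} {ν : E → E} {v : E} {k t : ℝ}
    (hγ : HasDerivAt γ v t) (hν : HasDerivAt (fun s => ν (γ s)) (k • v) t) (r : ℝ) :
    HasDerivAt (fun s => inwardOffset ν r (γ s)) ((1 - r * k) • v) t := by
  refine (hγ.sub (hν.const_smul r)).congr_deriv ?_
  module

theorem hasDerivAt_phase [NormedSpace ℝ E] {γ : ℝ → E} {ν : E → E} {θ : ℝ → ℝ} {v : E}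
    {k r c t : ℝ} (hγ : HasDerivAt γ v (θ t)) (hν : HasDerivAt (fun s => ν (γ s)) (k • v) (θ t))
    (hv : v ≠ 0) (hrk : r * k ≠ 1) (hθ : ContinuousAt θ t)
    (hu : HasDerivAt (fun s => inwardOffset ν r (γ (θ s))) (((1 - r * k) * c) • v) t) :
    HasDerivAt θ c t := by
  rw [mul_comm, mul_smul] at hu
  exact hasDerivAt_of_comp (smul_ne_zero (sub_ne_zero.2 hrk.symm) hv)
    (hasDerivAt_inwardOffset_comp hγ hν r) hθ hu

variable [InnerProductSpace ℝ E] {p τ ν : E → E} {u : ℝ → E}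

theorem infDist_eq_of_tangent_velocity {K : Set E} (horth : ∀ x ∈ K, ⟪ν x, τ x⟫ = 0)
    (hp : ∀ t, p (u t) ∈ K) (hdist : ∀ t, dist (u t) (p (u t)) = infDist (u t) K)
    (hin : ∀ t, u t = inwardOffset ν (infDist (u t) K) (p (u t))) {speed : ℝ → ℝ}
    (hu : ∀ t, HasDerivAt u (speed t • τ (p (u t))) t) (a b : ℝ) :
    infDist (u a) K = infDist (u b) K := by
  refine infDist_eq_of_inner_velocity_eq_zero hu hp hdist (fun t => ?_) a b
  have hnormal : u t - p (u t) = -(infDist (u t) K • ν (p (u t))) := by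
    rw [sub_eq_iff_eq_add', ← sub_eq_add_neg]
    exact hin t
  rw [hnormal, inner_neg_left, inner_smul_left, inner_smul_right, horth _ (hp t), mul_zero,
    mul_zero, neg_zero]

/-- The limit system along a simple closed curve in a real inner product space, with a tangent field
`τ` in the role of `iν` and a normal field `ν` whose derivative along the curve is `κ τ`. -/
theorem limit_system_solutions_periodic_general {L δ : ℝ} {γ : ℝ → E} {κ : E → ℝ}
    (hγ : IsSimpleClosedCurve γ L)
    (hτ : ∀ t, HasDerivAt γ (τ (γ t)) t) (hτ_ne : ∀ t, τ (γ t) ≠ 0)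
    (horth : ∀ x ∈ range γ, ⟪ν x, τ x⟫ = 0)
    (hν : ∀ t, HasDerivAt (fun s => ν (γ s)) (κ (γ t) • τ (γ t)) t)
    (hκ : ∀ x ∈ range γ, κ x < 1 / δ)
    (hp : ∀ t, IsUniqueNearestPoint (range γ) (u t) (p (u t)))
    (hin : ∀ t, u t = inwardOffset ν (infDist (u t) (range γ)) (p (u t)))
    (hud : ∀ t, 0 < infDist (u t) (range γ) ∧ infDist (u t) (range γ) ≤ δ)
    (hu : ∀ t, HasDerivAt u (((1 - infDist (u t) (range γ) * κ (p (u t))) *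
      (δ / infDist (u t) (range γ))) • τ (p (u t))) t) :
    ∃ ε, 0 < ε ∧ ε ≤ δ ∧ (∀ t, infDist (u t) (range γ) = ε) ∧
      IsLeast {T | 0 < T ∧ Function.Periodic u T} (ε * L / δ) := by
  obtain ⟨ε, hε⟩ : ∃ ε, ∀ t, infDist (u t) (range γ) = ε :=
    ⟨_, fun t => infDist_eq_of_tangent_velocity horth (fun t => (hp t).mem)
      (fun t => (hp t).dist_eq) hin hu t 0⟩
  simp only [hε, forall_const] at hud hin hu ⊢
  obtain ⟨hε_pos, hεδ⟩ := hud
  have hu_cont : Continuous u := continuous_iff_continuousAt.2 fun t => (hu t).continuousAt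
  obtain ⟨θ, hθ_cont, hθ⟩ := hγ.exists_continuous_phase
    (IsUniqueNearestPoint.continuous hγ.isCompact_range hu_cont hp) fun t => (hp t).mem
  simp only [← hθ] at hin hu
  have hεκ : ∀ s, ε * κ (γ s) ≠ 1 := fun s => ne_of_lt <|
    calc ε * κ (γ s) < ε * (1 / δ) := by gcongr; exact hκ _ (mem_range_self s)
      _ ≤ 1 := by rw [mul_one_div]; exact div_le_one_of_le₀ hεδ (hε_pos.le.trans hεδ)
  have hθ_deriv : ∀ t, HasDerivAt θ (δ / ε) t := fun t =>
    hasDerivAt_phase (hτ _) (hν _) (hτ_ne _) (hεκ _) hθ_cont.continuousAt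
      (by simpa only [← hin] using hu t)
  have hp_phase : p ∘ u = fun t => γ (θ 0 + t * (δ / ε)) := funext fun t => by
    rw [Function.comp_apply, ← hθ, eq_add_smul_of_hasDerivAt_const hθ_deriv t, smul_eq_mul]
  have period_iff : ∀ T, Function.Periodic u T ↔ Function.Periodic (p ∘ u) T := fun T =>
    ⟨fun h => h.comp p, fun h t => by
      rw [hin, hin t, hθ, hθ]
      exact congrArg (inwardOffset ν ε) (h t)⟩
  refine ⟨ε, hε_pos, hεδ, rfl, ?_⟩
  simp only [period_iff, hp_phase]
  simpa only [div_div_eq_mul_div, mul_comm] using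
    hγ.isLeast_period_comp_affine (θ 0) (div_pos (hε_pos.trans_le hεδ) hε_pos)

end LimitSystem

theorem inner_I_mul_self_right (z : ℂ) : ⟪z, Complex.I * z⟫ = 0 := by
  simp [Complex.inner, mul_comm z.re]

/-- Any C¹ solution of the limit system
`u' = (1 - d(u)κ(p(u)))·(δ/d(u))·i·ν(p(u))` staying in `Ω_δ` has constant distance
`ε ∈ (0,δ]` to `Γ` and is periodic with minimal period `εL/δ`. -/
theorem limit_system_solutions_periodic
    (L : ℝ) (hL : 0 < L) (γ : ℝ → ℂ)
    (hγC : ContDiff ℝ 3 γ) (hγper : Function.Periodic γ L)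
    (hγunit : ∀ t, ‖deriv γ t‖ = 1) (hγinj : Set.InjOn γ (Set.Ico 0 L))
    (Γset : Set ℂ) (hΓ : Γset = Set.range γ)
    (ν : ℂ → ℂ) (hν : ∀ t, ν (γ t) = -Complex.I * deriv γ t)
    (κ : ℂ → ℝ) (hκ : ∀ t, deriv (fun s => ν (γ s)) t = (κ (γ t) : ℂ) * deriv γ t)
    (Ω : Set ℂ) (hΩopen : IsOpen Ω) (hΩconn : IsConnected Ω)
    (hΓfr : Γset ⊆ frontier Ω)
    (hΓcomp : ∀ q ∈ Γset, connectedComponentIn (frontier Ω) q = Γset)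
    (d : ℂ → ℝ) (hd : ∀ z, d z = Metric.infDist z Γset)
    (δ : ℝ) (hδ : 0 < δ) (hκδ : ∀ q ∈ Γset, |κ q| < 1/δ)
    (p : ℂ → ℂ)
    (hp : ∀ z ∈ Ω, d z ≤ δ →
      p z ∈ Γset ∧ dist z (p z) = d z ∧ ∀ q ∈ Γset, dist z q = d z → q = p z)
    (hin : ∀ z ∈ Ω, d z ≤ δ → z = p z - (d z : ℝ) • ν (p z))
    -- the solution u of the limit system
    (u : ℝ → ℂ) (huC : ContDiff ℝ 1 u) (huΩ : ∀ t, u t ∈ Ω)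
    (hud : ∀ t, 0 < d (u t) ∧ d (u t) ≤ δ)
    (huode : ∀ t, deriv u t =
      ((1 - d (u t) * κ (p (u t))) * (δ / d (u t))) • (Complex.I * ν (p (u t)))) :
    ∃ ε : ℝ, 0 < ε ∧ ε ≤ δ ∧ (∀ t, d (u t) = ε) ∧
      Function.Periodic u (ε * L / δ) ∧
      ∀ T, 0 < T → Function.Periodic u T → ε * L / δ ≤ T := by
  subst hΓ
  obtain rfl : d = fun z => Metric.infDist z (range γ) := funext hd
  have tangent : ∀ t, Complex.I * ν (γ t) = deriv γ t := fun t => by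
    rw [hν, ← mul_assoc, mul_neg, Complex.I_mul_I, neg_neg, one_mul]
  have hνd : Differentiable ℝ fun s => ν (γ s) := by
    have hγ2 : ContDiff ℝ 2 γ := hγC.of_le (by norm_num)
    simpa only [hν] using hγ2.differentiable_deriv_two.const_mul (-Complex.I)
  obtain ⟨ε, hε, hεδ, hdist, hleast⟩ := limit_system_solutions_periodic_general
    (τ := fun z => Complex.I * ν z) ⟨hL, hγC.continuous, hγper, hγinj⟩
    (fun t => tangent t ▸ (hγC.differentiable (by norm_num) t).hasDerivAt)
    (fun t => by rw [tangent, ← norm_ne_zero_iff, hγunit]; exact one_ne_zero)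
    (fun x _ => inner_I_mul_self_right (ν x))
    (fun t => by rw [tangent, Complex.real_smul, ← hκ]; exact (hνd t).hasDerivAt)
    (fun x hx => (le_abs_self _).trans_lt (hκδ x hx))
    (fun t => have ⟨mem, dist_eq, unique⟩ := hp _ (huΩ t) (hud t).2; ⟨mem, dist_eq, unique⟩)
    (fun t => hin _ (huΩ t) (hud t).2) hud
    (fun t => huode t ▸ (huC.differentiable (by norm_num) t).hasDerivAt)
  exact ⟨ε, hε, hεδ, hdist, hleast.1.2, fun T hT hper => hleast.2 ⟨hT, hper⟩⟩
end

section
/- Choreography reduction: let Ω ⊂ ℂ be open, N ≥ 1 an integer, and H : F_N(Ω) → ℝ a C¹ function invariant under every permutation of its N arguments. Let T > 0, θ_k = (k-1)T/N for k = 1,…,N, and let u : ℝ → Ω be C¹ and T-periodic such that (u(t+θ₁),…,u(t+θ_N)) ∈ F_N(Ω) for all t and u'(t) = -i·∇_{z₁}H(u(t+θ₁),…,u(t+θ_N)) for all t. Then z(t) := (u(t+θ₁),…,u(t+θ_N)) satisfies z_k'(t) = -i·∇_{z_k}H(z(t)) for all k = 1,…,N and all t. -/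
open Function Topology

section PartialGradient

variable {ι 𝕜 E : Type*} [DecidableEq ι]

lemma hasFDerivAt_comp_update_comp_iff {F : Type*} [NontriviallyNormedField 𝕜]
    [NormedAddCommGroup E] [NormedSpace 𝕜 E] [NormedAddCommGroup F] [NormedSpace 𝕜 F]
    {H : (ι → E) → F} {z : ι → E} {σ : ι → ι} (hσ : Injective σ)
    (hH : ∀ᶠ y in 𝓝 z, H (y ∘ σ) = H y) (j : ι) {L : E →L[𝕜] F} :
    HasFDerivAt (fun w ↦ H (update (z ∘ σ) j w)) L (z (σ j)) ↔
      HasFDerivAt (fun w ↦ H (update z (σ j) w)) L (z (σ j)) := by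
  have hupdate : Filter.Tendsto (update z (σ j)) (𝓝 (z (σ j))) (𝓝 z) := by
    have hcont : Continuous (update z (σ j)) := continuous_const.update (σ j) continuous_id
    simpa using hcont.tendsto (z (σ j))
  refine Filter.EventuallyEq.hasFDerivAt_iff ?_
  filter_upwards [hupdate.eventually hH] with w hw
  rw [← hw, update_comp_eq_of_injective z hσ]

lemma partialGradient_comp_eq [RCLike 𝕜] [NormedAddCommGroup E] [InnerProductSpace 𝕜 E]
    [CompleteSpace E] {H : (ι → E) → 𝕜} {z : ι → E} {σ : ι → ι} (hσ : Injective σ)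
    (hH : ∀ᶠ y in 𝓝 z, H (y ∘ σ) = H y) {j : ι} {g g' : E}
    (hg : HasGradientAt (fun w ↦ H (update (z ∘ σ) j w)) g ((z ∘ σ) j))
    (hg' : HasGradientAt (fun w ↦ H (update z (σ j) w)) g' (z (σ j))) : g = g' :=
  HasGradientAt.unique ((hasFDerivAt_comp_update_comp_iff hσ hH j).mp hg) hg'

end PartialGradient

section Choreography

variable {X : Type*}

lemma periodic_add_mod_nsmul {α : Type*} [AddMonoid α] {u : α → X} {n : ℕ} {c : α}
    (hu : Periodic u (n • c)) (t : α) (m : ℕ) : u (t + (m % n) • c) = u (t + m • c) := by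
  conv_rhs => rw [← Nat.mod_add_div m n, add_nsmul, mul_comm, mul_nsmul', ← add_assoc]
  exact (hu.nsmul (m / n) _).symm

/-- The configuration `(u (t + θ₁), …, u (t + θ_N))` of `N` particles following the path `u` with
equal time lags `T / N`. The particles are numbered from `0`, so the `j`-th phase shift is
`j * T / N`. -/
def choreography {K : Type*} [DivisionRing K] (u : K → X) (T : K) (N : ℕ) (t : K) : Fin N → X :=
  fun j ↦ u (t + (j : ℕ) * T / N)

lemma choreography_add_phase {K : Type*} [Field K] [CharZero K] {u : K → X} {T : K}
    (hu : Periodic u T) {N : ℕ} [NeZero N] (t : K) (k : Fin N) :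
    choreography u T N (t + (k : ℕ) * T / N) = choreography u T N t ∘ (k + ·) := by
  have hN : (N : K) ≠ 0 := NeZero.ne _
  have hperiod : N • (T / N) = T := by rw [nsmul_eq_mul, mul_div_cancel₀ T hN]
  have hphase (m : ℕ) : (m : K) * T / N = m • (T / N) := by rw [nsmul_eq_mul, mul_div_assoc]
  funext j
  simp only [choreography, comp_apply, hphase, Fin.val_add, add_assoc, ← add_nsmul]
  exact (periodic_add_mod_nsmul (hperiod.symm ▸ hu) t (k + j)).symm

end Choreography

/-- The space `F_N(Ω)` of ordered configurations of distinct points of `Ω`, with the points labelled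
by an arbitrary index type. -/
def configurationSpace (ι : Type*) {X : Type*} (Ω : Set X) : Set (ι → X) :=
  {z | (∀ k, z k ∈ Ω) ∧ ∀ j k, j ≠ k → z j ≠ z k}

lemma isOpen_configurationSpace (ι : Type*) [Finite ι] {X : Type*} [TopologicalSpace X] [T2Space X]
    {Ω : Set X} (hΩ : IsOpen Ω) : IsOpen (configurationSpace ι Ω) := by
  simp only [configurationSpace, Set.ofPred_and, Set.ofPred_forall]
  exact (isOpen_iInter_of_finite fun k ↦ hΩ.preimage (continuous_apply k)).inter <|
    isOpen_iInter_of_finite fun j ↦ isOpen_iInter_of_finite fun k ↦ isOpen_iInter_of_finite fun _ ↦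
      isOpen_ne_fun (continuous_apply j) (continuous_apply k)

lemma iprCLM_eq_toDual (g : ℂ) : iprCLM g = InnerProductSpace.toDual ℝ ℂ g := by
  ext w
  simp [iprCLM, Complex.inner, mul_comm]

lemma hasFDerivAt_iprCLM_iff {f : ℂ → ℝ} {g z : ℂ} :
    HasFDerivAt f (iprCLM g) z ↔ HasGradientAt f g z := by
  rw [iprCLM_eq_toDual, hasGradientAt_iff_hasFDerivAt]

theorem choreography_reduction_general {E : Type*} [NormedAddCommGroup E] [InnerProductSpace ℝ E]
    [CompleteSpace E] {N : ℕ} [NeZero N] {S : Set (Fin N → E)} (hS : IsOpen S)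
    {H : (Fin N → E) → ℝ} (hH : ∀ k, ∀ z ∈ S, H (z ∘ (k + ·)) = H z)
    {gradH : Fin N → (Fin N → E) → E}
    (hgradH : ∀ z ∈ S, ∀ k, HasGradientAt (fun w ↦ H (update z k w)) (gradH k z) (z k))
    (J : E → E) {T : ℝ} {u : ℝ → E} (hperiodic : Periodic u T)
    (hmem : ∀ t, choreography u T N t ∈ S)
    (hu : ∀ t, HasDerivAt u (J (gradH 0 (choreography u T N t))) t) (k : Fin N) (t : ℝ) :
    HasDerivAt (fun s ↦ choreography u T N s k) (J (gradH k (choreography u T N t))) t := by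
  set z := choreography u T N t
  have hrotate : choreography u T N (t + (k : ℕ) * T / N) = z ∘ (k + ·) :=
    choreography_add_phase hperiodic t k
  have hinvariant : ∀ᶠ y in 𝓝 z, H (y ∘ (k + ·)) = H y :=
    Filter.eventually_of_mem (hS.mem_nhds (hmem t)) (hH k)
  have hgrad : gradH 0 (z ∘ (k + ·)) = gradH k z := by
    simpa only [add_zero] using partialGradient_comp_eq (add_right_injective k) hinvariant
      (hgradH _ (hrotate ▸ hmem _) 0) (hgradH z (hmem t) (k + 0))
  rw [← hgrad, ← hrotate]
  exact (hu _).comp_add_const t _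

/-- Choreography reduction: if `H` is a C¹ permutation invariant
Hamiltonian on `F_N(Ω)` and the `T`-periodic function `u` solves
`u' = -i∇_{z₁}H(u(·+θ₁),…,u(·+θ_N))` with `θ_k = (k-1)T/N`, then
`z(t) = (u(t+θ₁),…,u(t+θ_N))` solves `z_k' = -i∇_{z_k}H(z)` for every `k`. -/
theorem choreography_reduction
    (Ω : Set ℂ) (hΩopen : IsOpen Ω)
    (N : ℕ) (hN : 0 < N)
    (H : (Fin N → ℂ) → ℝ)
    -- H is C¹ on F_N(Ω)
    (hHC : ContDiffOn ℝ 1 H {z : Fin N → ℂ | (∀ k, z k ∈ Ω) ∧ ∀ j k, j ≠ k → z j ≠ z k})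
    -- H is invariant under all permutations of its arguments
    (hHsym : ∀ σ : Equiv.Perm (Fin N), ∀ z : Fin N → ℂ,
      ((∀ k, z k ∈ Ω) ∧ ∀ j k, j ≠ k → z j ≠ z k) → H (z ∘ σ) = H z)
    -- gradH k z is the real gradient of H in its k-th argument at z
    (gradH : Fin N → (Fin N → ℂ) → ℂ)
    (hgradH : ∀ z : Fin N → ℂ, ((∀ k, z k ∈ Ω) ∧ ∀ j k, j ≠ k → z j ≠ z k) → ∀ k,
      HasFDerivAt (fun w => H (Function.update z k w)) (iprCLM (gradH k z)) (z k))
    -- the T-periodic C¹ function u and the phase shifts θ_k = (k-1)T/N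
    (T : ℝ) (hT : 0 < T)
    (u : ℝ → ℂ) (huC : ContDiff ℝ 1 u) (huper : Function.Periodic u T)
    (huΩ : ∀ t, u t ∈ Ω)
    (hsep : ∀ t, ∀ j k : Fin N, j ≠ k →
      u (t + (j : ℕ) * T / N) ≠ u (t + (k : ℕ) * T / N))
    (hode : ∀ t, deriv u t =
      -(Complex.I * gradH ⟨0, hN⟩ (fun k => u (t + (k : ℕ) * T / N)))) :
    ∀ (k : Fin N) (t : ℝ),
      deriv (fun s => u (s + (k : ℕ) * T / N)) t =
        -(Complex.I * gradH k (fun j => u (t + (j : ℕ) * T / N))) := by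
  have : NeZero N := ⟨hN.ne'⟩
  have hu (t : ℝ) : HasDerivAt u (-(Complex.I * gradH 0 (choreography u T N t))) t :=
    (huC.differentiable one_ne_zero t).hasDerivAt.congr_deriv (hode t)
  exact fun k t ↦ (choreography_reduction_general (isOpen_configurationSpace _ hΩopen)
    (fun k ↦ hHsym (Equiv.addLeft k)) (fun z hz k ↦ hasFDerivAt_iprCLM_iff.mp (hgradH z hz k))
    (fun w ↦ -(Complex.I * w)) huper (fun t ↦ ⟨fun _ ↦ huΩ _, hsep t⟩) hu k t).deriv
end

section
/- Kernel of the linearization at the limit solution: if w : ℝ → ℂ is C¹, L-periodic and satisfies for all t, writing ν = ν(p(v(t))), κ = κ(p(v(t))), κ' = κ'(p(v(t))), the linear equation w'(t) + κ·ν·⟨iν, w(t)⟩ + (δκ'/(1 - δκ))·iν·⟨iν, w(t)⟩ - (1/δ)·iν·⟨ν, w(t)⟩ = 0, then there exists c ∈ ℝ with w = c·v'. -/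
/-!
Let `q t` be the foot point of `v t` on the curve, so `v = q - δ ν(q)`. The limit system shows that
`ν(q)` is the continuous unit vector `-i v' / |v'|`, so `q` is continuous. Since the parallel curve
`γ - δ ν(γ)` has the nonzero velocity `(1 - δ κ) γ'` and `v` runs along it with the same velocity,
`q` must run along `γ` with unit speed. Thus `N = ν(q)` and `K = κ(q)` satisfy `N' = K iN` and
`K' = κ'(q)`.

In the moving frame `(N, iN)` the linear equation for `w` says that `⟨N, w⟩` is a constant `b` and
that `⟨iN, w⟩ / (1 - δ K)` has derivative `b / δ`. A periodic function with constant derivative is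
constant, so `b = 0` and `w` is a constant multiple of `(1 - δ K) iN = v'`.
-/

open Filter Topology
open scoped InnerProductSpace

section ScalarFactor

lemma tendsto_of_tendsto_smul {ι 𝕜 E : Type*} [NormedField 𝕜] [AddCommGroup E]
    [TopologicalSpace E] [Module 𝕜 E] [SeparatingDual 𝕜 E] {l : Filter ι} {r : ι → 𝕜} {x : ι → E}
    {c : 𝕜} {a : E} (ha : a ≠ 0) (hx : Tendsto x l (𝓝 a))
    (hrx : Tendsto (fun i => r i • x i) l (𝓝 (c • a))) : Tendsto r l (𝓝 c) := by
  obtain ⟨φ, hφ⟩ := SeparatingDual.exists_eq_one (R := 𝕜) ha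
  have hφx : Tendsto (fun i => φ (x i)) l (𝓝 1) := hφ ▸ (φ.continuous.tendsto a).comp hx
  have hφrx : Tendsto (fun i => r i * φ (x i)) l (𝓝 c) := by
    simpa [Function.comp_def, hφ] using (φ.continuous.tendsto (c • a)).comp hrx
  have hquot := hφrx.div hφx one_ne_zero
  rw [div_one] at hquot
  refine hquot.congr' ?_
  filter_upwards [hφx.eventually_ne one_ne_zero] with i hi
  exact mul_div_cancel_right₀ _ hi

lemma continuous_of_continuous_pos_smul {X E : Type*} [TopologicalSpace X] [NormedAddCommGroup E]
    [NormedSpace ℝ E] {r : X → ℝ} {T : X → E} (h : Continuous fun x => r x • T x)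
    (hr : ∀ x, 0 < r x) (hT : ∀ x, ‖T x‖ = 1) : Continuous T := by
  have hnorm : ∀ x, ‖r x • T x‖ = r x := fun x => by
    rw [norm_smul, hT, mul_one, Real.norm_of_nonneg (hr x).le]
  have hrc : Continuous r := by simpa only [hnorm] using h.norm
  exact ((hrc.inv₀ fun x => (hr x).ne').smul h).congr fun x => inv_smul_smul₀ (hr x).ne' _

lemma contDiff_of_contDiff_smul {D E : Type*} [NormedAddCommGroup D] [NormedSpace ℝ D]
    [NormedAddCommGroup E] [InnerProductSpace ℝ E] {n : WithTop ℕ∞} {k : D → ℝ} {T : D → E}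
    (h : ContDiff ℝ n fun x => k x • T x) (hT : ContDiff ℝ n T) (hT1 : ∀ x, ‖T x‖ = 1) :
    ContDiff ℝ n k := by
  simpa [real_inner_smul_right, hT1] using hT.inner ℝ h

end ScalarFactor

section MotionAlongCurve

variable {𝕜 X E F : Type*} [NontriviallyNormedField 𝕜] [NormedAddCommGroup E] [NormedSpace 𝕜 E]
  [NormedAddCommGroup F] [NormedSpace 𝕜 F] {γ q : 𝕜 → X} {f : X → E} {g : X → F} {t₀ : 𝕜}

lemma tendsto_dslope_comp {ι : Type*} {l : Filter ι} {h : 𝕜 → E} {θ : ι → 𝕜} {a : E} {s : 𝕜}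
    (hh : HasDerivAt h a s) (hθ : Tendsto θ l (𝓝 s)) :
    Tendsto (fun i => dslope h s (θ i)) l (𝓝 a) := by
  have hcont := (continuousAt_dslope_same.2 hh.differentiableAt).tendsto
  rw [dslope_same, hh.deriv] at hcont
  exact hcont.comp hθ

lemma slope_comp_eq_smul_dslope {s σ t : 𝕜} (hs : γ s = q t₀) (hσ : γ σ = q t) :
    slope (fun t => f (q t)) t₀ t
      = ((t - t₀)⁻¹ * (σ - s)) • dslope (fun s => f (γ s)) s σ := by
  rw [mul_smul, sub_smul_dslope, slope_def_module, hs, hσ]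

/-- The parameters of `q` on `γ` need not depend continuously on time, since `γ` may return to the
same point. Instead they converge along every ultrafilter, by compactness of `S`; the factor by
which they run faster than time is read off `f` and serves for `g` as well. -/
lemma hasDerivAt_comp_of_forall_mem_image [TopologicalSpace X] [T2Space X] [SeparatingDual 𝕜 E]
    {S : Set 𝕜} {a : E} {b : F} {c : 𝕜}
    (hS : IsCompact S) (hγ : Continuous γ) (hqS : ∀ t, q t ∈ γ '' S)
    (hq : ContinuousAt q t₀) (ha : a ≠ 0)
    (hf : ∀ s, γ s = q t₀ → HasDerivAt (fun s => f (γ s)) a s)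
    (hg : ∀ s, γ s = q t₀ → HasDerivAt (fun s => g (γ s)) b s)
    (hfq : HasDerivAt (fun t => f (q t)) (c • a) t₀) :
    HasDerivAt (fun t => g (q t)) (c • b) t₀ := by
  choose θ hθS hθ using hqS
  rw [hasDerivAt_iff_tendsto_slope, tendsto_iff_ultrafilter] at hfq ⊢
  intro U hU
  obtain ⟨s, -, hθs⟩ : ∃ s ∈ S, Tendsto θ U (𝓝 s) :=
    hS.ultrafilter_le_nhds' (U.map θ) (Eventually.of_forall (p := fun t => θ t ∈ S) hθS)
  have hγs : γ s = q t₀ := by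
    refine tendsto_nhds_unique ((hγ.tendsto s).comp hθs) ?_
    simpa only [Function.comp_def, hθ] using
      hq.tendsto.mono_left (hU.trans nhdsWithin_le_nhds)
  have hspeed : Tendsto (fun t => (t - t₀)⁻¹ * (θ t - s)) U (𝓝 c) :=
    tendsto_of_tendsto_smul ha (tendsto_dslope_comp (hf s hγs) hθs)
      ((hfq U hU).congr fun t => slope_comp_eq_smul_dslope hγs (hθ t))
  exact (hspeed.smul (tendsto_dslope_comp (hg s hγs) hθs)).congr fun t =>
    (slope_comp_eq_smul_dslope hγs (hθ t)).symm

end MotionAlongCurve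

section MovingFrame

lemma ipr_eq_inner (z w : ℂ) : ipr z w = ⟪z, w⟫_ℝ := by
  rw [Complex.inner, ipr, Complex.mul_re, Complex.conj_re, Complex.conj_im]
  ring

lemma inner_self_I_mul (z : ℂ) : ⟪z, Complex.I * z⟫_ℝ = 0 := by
  rw [← ipr_eq_inner, ipr, Complex.I_mul_re, Complex.I_mul_im]
  ring

lemma norm_I_mul (z : ℂ) : ‖Complex.I * z‖ = ‖z‖ := by
  rw [norm_mul, Complex.norm_I, one_mul]

lemma inner_smul_add_inner_I_mul_smul {z : ℂ} (hz : ‖z‖ = 1) (w : ℂ) :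
    ⟪z, w⟫_ℝ • z + ⟪Complex.I * z, w⟫_ℝ • (Complex.I * z) = w := by
  have hz2 : z.re * z.re + z.im * z.im = 1 := by
    rw [← Complex.normSq_apply, Complex.normSq_eq_norm_sq, hz, one_pow]
  simp only [← ipr_eq_inner, ipr]
  apply Complex.ext
  · simp only [Complex.add_re, Complex.smul_re, Complex.I_mul_re, Complex.I_mul_im, smul_eq_mul]
    linear_combination w.re * hz2
  · simp only [Complex.add_im, Complex.smul_im, Complex.I_mul_re, Complex.I_mul_im, smul_eq_mul]
    linear_combination w.im * hz2

variable {N w : ℝ → ℂ}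

lemma hasDerivAt_inner_normal {k α β t : ℝ} (hN1 : ‖N t‖ = 1)
    (hN : HasDerivAt N (k • (Complex.I * N t)) t)
    (hw : HasDerivAt w (α • N t + β • (Complex.I * N t)) t) :
    HasDerivAt (fun s => ⟪N s, w s⟫_ℝ) (α + k * ⟪Complex.I * N t, w t⟫_ℝ) t := by
  refine (hN.inner ℝ hw).congr_deriv ?_
  simp only [inner_add_right, real_inner_smul_left, real_inner_smul_right,
    real_inner_self_eq_norm_sq, hN1, inner_self_I_mul]
  ring

/-- The normal of the rotated frame `(iN, -N)` is the tangent `iN`. -/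
lemma hasDerivAt_inner_tangent {k α β t : ℝ} (hN1 : ‖N t‖ = 1)
    (hN : HasDerivAt N (k • (Complex.I * N t)) t)
    (hw : HasDerivAt w (α • N t + β • (Complex.I * N t)) t) :
    HasDerivAt (fun s => ⟪Complex.I * N s, w s⟫_ℝ) (β - k * ⟪N t, w t⟫_ℝ) t := by
  have hII : Complex.I * (Complex.I * N t) = -N t := by
    rw [← mul_assoc, Complex.I_mul_I, neg_one_mul]
  refine (hasDerivAt_inner_normal (N := fun s => Complex.I * N s) (k := k) (α := β) (β := -α)
    ((norm_I_mul _).trans hN1) ?_ ?_).congr_deriv ?_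
  · exact (hN.const_mul Complex.I).congr_deriv (mul_smul_comm _ _ _)
  · exact hw.congr_deriv (by rw [hII, smul_neg, neg_smul, neg_neg, add_comm])
  · rw [hII, inner_neg_left, mul_neg, sub_eq_add_neg]

lemma eq_zero_of_periodic_of_hasDerivAt_const {c : ℝ → ℝ} {b L : ℝ} (hL : 0 < L)
    (hper : Function.Periodic c L) (hc : ∀ t, HasDerivAt c b t) : b = 0 := by
  obtain ⟨-, -, hb⟩ := exists_hasDerivAt_eq_zero hL
    (fun t _ => (hc t).continuousAt.continuousWithinAt) hper.eq.symm fun t _ => hc t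
  exact hb

lemma exists_forall_eq_of_hasDerivAt_zero {E : Type*} [NormedAddCommGroup E] [NormedSpace ℝ E]
    {c : ℝ → E} (hc : ∀ t, HasDerivAt c 0 t) : ∃ a, ∀ t, c t = a :=
  ⟨c 0, fun t => is_const_of_deriv_eq_zero (fun s => (hc s).differentiableAt)
    (fun s => (hc s).deriv) t 0⟩

lemma exists_eq_smul_of_frame_equation {L δ : ℝ} {K K' : ℝ → ℝ} (hL : 0 < L) (hδ : δ ≠ 0)
    (hN1 : ∀ t, ‖N t‖ = 1) (hN : ∀ t, HasDerivAt N (K t • (Complex.I * N t)) t)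
    (hK : ∀ t, HasDerivAt K (K' t) t) (hδK : ∀ t, 1 - δ * K t ≠ 0)
    (hNper : Function.Periodic N L) (hKper : Function.Periodic K L)
    (hwper : Function.Periodic w L)
    (hw : ∀ t, HasDerivAt w (-(K t * ⟪Complex.I * N t, w t⟫_ℝ) • N t
      + (1 / δ * ⟪N t, w t⟫_ℝ - δ * K' t / (1 - δ * K t) * ⟪Complex.I * N t, w t⟫_ℝ)
        • (Complex.I * N t)) t) :
    ∃ c : ℝ, ∀ t, w t = c • ((1 - δ * K t) • (Complex.I * N t)) := by
  have hnormal : ∀ t, HasDerivAt (fun s => ⟪N s, w s⟫_ℝ) 0 t := fun t =>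
    (hasDerivAt_inner_normal (hN1 t) (hN t) (hw t)).congr_deriv (neg_add_cancel _)
  obtain ⟨b, hb⟩ := exists_forall_eq_of_hasDerivAt_zero hnormal
  have htangent : ∀ t,
      HasDerivAt (fun s => ⟪Complex.I * N s, w s⟫_ℝ / (1 - δ * K s)) (b / δ) t := by
    intro t
    refine ((hasDerivAt_inner_tangent (hN1 t) (hN t) (hw t)).div
      (((hK t).const_mul δ).const_sub 1) (hδK t)).congr_deriv ?_
    have hδKt := hδK t
    rw [hb]
    field_simp
    ring
  have hper : Function.Periodic (fun s => ⟪Complex.I * N s, w s⟫_ℝ / (1 - δ * K s)) L := fun t => by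
    simp only [hNper t, hKper t, hwper t]
  have hbδ : b / δ = 0 := eq_zero_of_periodic_of_hasDerivAt_const hL hper htangent
  have hb0 : b = 0 := (div_eq_zero_iff.1 hbδ).resolve_right hδ
  obtain ⟨c, hc⟩ := exists_forall_eq_of_hasDerivAt_zero fun t => hbδ ▸ htangent t
  refine ⟨c, fun t => ?_⟩
  calc w t = ⟪N t, w t⟫_ℝ • N t + ⟪Complex.I * N t, w t⟫_ℝ • (Complex.I * N t) :=
        (inner_smul_add_inner_I_mul_smul (hN1 t) (w t)).symm
    _ = ⟪Complex.I * N t, w t⟫_ℝ • (Complex.I * N t) := by rw [hb, hb0, zero_smul, zero_add]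
    _ = c • ((1 - δ * K t) • (Complex.I * N t)) := by
        rw [smul_smul, ← hc t, div_mul_cancel₀ _ (hδK t)]

end MovingFrame

section Curve

variable {γ N : ℝ → ℂ} {k : ℝ → ℝ}

lemma I_mul_normal (hN : ∀ s, N s = -Complex.I * deriv γ s) (s : ℝ) :
    Complex.I * N s = deriv γ s := by
  rw [hN, ← mul_assoc, mul_neg, Complex.I_mul_I, neg_neg, one_mul]

lemma norm_normal (hγ1 : ∀ s, ‖deriv γ s‖ = 1) (hN : ∀ s, N s = -Complex.I * deriv γ s) (s : ℝ) :
    ‖N s‖ = 1 := by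
  rw [← norm_I_mul, I_mul_normal hN, hγ1]

lemma contDiff_normal {n : WithTop ℕ∞} (hγ : ContDiff ℝ (n + 1) γ)
    (hN : ∀ s, N s = -Complex.I * deriv γ s) : ContDiff ℝ n N := by
  rw [funext hN]
  exact contDiff_const.mul (contDiff_succ_iff_deriv.1 hγ).2.2

lemma contDiff_curvature {n : WithTop ℕ∞} (hγ : ContDiff ℝ (n + 1 + 1) γ)
    (hγ1 : ∀ s, ‖deriv γ s‖ = 1) (hN : ∀ s, N s = -Complex.I * deriv γ s)
    (hk : ∀ s, deriv N s = (k s : ℂ) * deriv γ s) : ContDiff ℝ n k := by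
  have hN' : ContDiff ℝ n (deriv N) := (contDiff_succ_iff_deriv.1 (contDiff_normal hγ hN)).2.2
  have hγ' : ContDiff ℝ n (deriv γ) := ((contDiff_succ_iff_deriv.1 hγ).2.2).of_le le_self_add
  rw [funext hk] at hN'
  exact contDiff_of_contDiff_smul (by simpa only [Complex.real_smul] using hN') hγ' hγ1

lemma hasDerivAt_normal (hγ : ContDiff ℝ 2 γ) (hN : ∀ s, N s = -Complex.I * deriv γ s)
    (hk : ∀ s, deriv N s = (k s : ℂ) * deriv γ s) (s : ℝ) :
    HasDerivAt N (k s • (Complex.I * N s)) s := by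
  have hNC : ContDiff ℝ 1 N := contDiff_normal (by simpa [one_add_one_eq_two] using hγ) hN
  rw [I_mul_normal hN, Complex.real_smul, ← hk]
  exact (hNC.differentiable one_ne_zero s).hasDerivAt

lemma hasDerivAt_parallel (hγ : ContDiff ℝ 2 γ) (hN : ∀ s, N s = -Complex.I * deriv γ s)
    (hk : ∀ s, deriv N s = (k s : ℂ) * deriv γ s) (δ s : ℝ) :
    HasDerivAt (fun s => γ s - δ • N s) ((1 - δ * k s) • (Complex.I * N s)) s := by
  have hγs : HasDerivAt γ (Complex.I * N s) s := by
    rw [I_mul_normal hN]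
    exact (hγ.differentiable two_ne_zero s).hasDerivAt
  refine (hγs.sub ((hasDerivAt_normal hγ hN hk s).const_smul δ)).congr_deriv ?_
  rw [sub_smul, one_smul, smul_smul]

end Curve

section FootPoint

variable {γ q v : ℝ → ℂ} {ν : ℂ → ℂ} {κ : ℂ → ℝ} {δ : ℝ}

lemma continuous_footPoint (hν1 : ∀ t, ‖ν (q t)‖ = 1) (hδκ : ∀ t, δ * κ (q t) < 1)
    (hvC : ContDiff ℝ 1 v) (hvq : ∀ t, v t = q t - δ • ν (q t))
    (hvode : ∀ t, deriv v t = (1 - δ * κ (q t)) • (Complex.I * ν (q t))) : Continuous q := by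
  have htangent : Continuous fun t => Complex.I * ν (q t) :=
    continuous_of_continuous_pos_smul (funext hvode ▸ hvC.continuous_deriv le_rfl)
      (fun t => sub_pos.2 (hδκ t)) fun t => (norm_I_mul _).trans (hν1 t)
  have hnormal : Continuous fun t => ν (q t) :=
    (htangent.const_mul Complex.I⁻¹).congr fun t => inv_mul_cancel_left₀ Complex.I_ne_zero _
  exact (hvC.continuous.add (hnormal.const_smul δ)).congr fun t =>
    (sub_eq_iff_eq_add.1 (hvq t).symm).symm

lemma hasDerivAt_comp_footPoint {F : Type*} [NormedAddCommGroup F] [NormedSpace ℝ F] {L : ℝ}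
    (hL : 0 < L) (hγC : ContDiff ℝ 2 γ) (hγper : Function.Periodic γ L)
    (hν : ∀ s, ν (γ s) = -Complex.I * deriv γ s)
    (hκ : ∀ s, deriv (fun s => ν (γ s)) s = (κ (γ s) : ℂ) * deriv γ s)
    (hq : ∀ t, q t ∈ Set.range γ) (hν1 : ∀ t, ‖ν (q t)‖ = 1) (hδκ : ∀ t, δ * κ (q t) < 1)
    (hvC : ContDiff ℝ 1 v) (hvq : ∀ t, v t = q t - δ • ν (q t))
    (hvode : ∀ t, deriv v t = (1 - δ * κ (q t)) • (Complex.I * ν (q t)))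
    {g g' : ℂ → F} (hg : ∀ s, HasDerivAt (fun s => g (γ s)) (g' (γ s)) s) (t : ℝ) :
    HasDerivAt (fun t => g (q t)) (g' (q t)) t := by
  have hvelocity : (1 - δ * κ (q t)) • (Complex.I * ν (q t)) ≠ 0 :=
    smul_ne_zero (sub_pos.2 (hδκ t)).ne'
      (norm_ne_zero_iff.1 (by rw [norm_I_mul, hν1]; exact one_ne_zero))
  have hv : HasDerivAt (fun t => q t - δ • ν (q t))
      ((1 : ℝ) • (1 - δ * κ (q t)) • (Complex.I * ν (q t))) t := by
    rw [one_smul, ← hvode, ← funext hvq]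
    exact (hvC.differentiable one_ne_zero t).hasDerivAt
  rw [← one_smul ℝ (g' (q t))]
  exact hasDerivAt_comp_of_forall_mem_image (f := fun z => z - δ • ν z)
    isCompact_Icc hγC.continuous (fun t => (hγper.image_Icc hL 0).symm ▸ hq t)
    (continuous_footPoint hν1 hδκ hvC hvq hvode).continuousAt hvelocity
    (fun s hs => hs ▸ hasDerivAt_parallel hγC hν hκ δ s) (fun s hs => hs ▸ hg s) hv

end FootPoint

theorem kernel_of_linearization_general
    (L : ℝ) (hL : 0 < L) (γ : ℝ → ℂ)
    (hγC : ContDiff ℝ 3 γ) (hγper : Function.Periodic γ L) (hγunit : ∀ t, ‖deriv γ t‖ = 1)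
    (ν : ℂ → ℂ) (hν : ∀ t, ν (γ t) = -Complex.I * deriv γ t)
    (κ : ℂ → ℝ) (hκ : ∀ t, deriv (fun s => ν (γ s)) t = (κ (γ t) : ℂ) * deriv γ t)
    (κ' : ℂ → ℝ) (hκ' : ∀ t, deriv (fun s => κ (γ s)) t = κ' (γ t))
    (δ : ℝ) (hδ : δ ≠ 0)
    (q : ℝ → ℂ) (hq : ∀ t, q t ∈ Set.range γ) (hqper : Function.Periodic q L)
    (hδκ : ∀ t, δ * κ (q t) < 1)
    (v : ℝ → ℂ) (hvC : ContDiff ℝ 1 v) (hvq : ∀ t, v t = q t - δ • ν (q t))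
    (hvode : ∀ t, deriv v t = (1 - δ * κ (q t)) • (Complex.I * ν (q t)))
    (w : ℝ → ℂ) (hwd : Differentiable ℝ w) (hwper : Function.Periodic w L)
    (hw : ∀ t,
      deriv w t
        + (κ (q t) * ipr (Complex.I * ν (q t)) (w t)) • ν (q t)
        + ((δ * κ' (q t) / (1 - δ * κ (q t))) * ipr (Complex.I * ν (q t)) (w t))
          • (Complex.I * ν (q t))
        - ((1 / δ) * ipr (ν (q t)) (w t)) • (Complex.I * ν (q t)) = 0) :
    ∃ c : ℝ, ∀ t, w t = c • deriv v t := by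
  have hγ2 : ContDiff ℝ 2 γ := hγC.of_le (by norm_num)
  have hκC : ContDiff ℝ 1 fun s => κ (γ s) :=
    contDiff_curvature (by convert hγC using 1; norm_num) hγunit hν hκ
  have hκd : ∀ s, HasDerivAt (fun s => κ (γ s)) (κ' (γ s)) s := fun s =>
    hκ' s ▸ (hκC.differentiable one_ne_zero s).hasDerivAt
  have hN1 : ∀ t, ‖ν (q t)‖ = 1 := fun t => by
    obtain ⟨s, hs⟩ := hq t
    exact hs ▸ norm_normal (N := fun s => ν (γ s)) hγunit hν s
  have hN : ∀ t, HasDerivAt (fun t => ν (q t)) (κ (q t) • (Complex.I * ν (q t))) t :=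
    hasDerivAt_comp_footPoint (g' := fun z => κ z • (Complex.I * ν z)) hL hγ2 hγper hν hκ hq hN1
      hδκ hvC hvq hvode (hasDerivAt_normal hγ2 hν hκ)
  have hK : ∀ t, HasDerivAt (fun t => κ (q t)) (κ' (q t)) t :=
    hasDerivAt_comp_footPoint hL hγ2 hγper hν hκ hq hN1 hδκ hvC hvq hvode hκd
  simp only [hvode]
  refine exists_eq_smul_of_frame_equation hL hδ hN1 hN hK (fun t => (sub_pos.2 (hδκ t)).ne')
    (hqper.comp ν) (hqper.comp κ) hwper fun t => (hwd t).hasDerivAt.congr_deriv ?_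
  simp only [ipr_eq_inner] at hw
  rw [← sub_eq_zero, ← hw t]
  module

/-- Kernel of the linearization at the limit solution `v`:
any C¹ `L`-periodic solution `w` of the linearized equation
`w' + κ·ν⟨iν,w⟩ + (δκ'/(1-δκ))·iν⟨iν,w⟩ - (1/δ)·iν⟨ν,w⟩ = 0`
(coefficients evaluated at `p(v(t))`) is a real multiple of `v'`. -/
theorem kernel_of_linearization
    (L : ℝ) (hL : 0 < L) (γ : ℝ → ℂ)
    (hγC : ContDiff ℝ 3 γ) (hγper : Function.Periodic γ L)
    (hγunit : ∀ t, ‖deriv γ t‖ = 1) (hγinj : Set.InjOn γ (Set.Ico 0 L))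
    (Γset : Set ℂ) (hΓ : Γset = Set.range γ)
    (ν : ℂ → ℂ) (hν : ∀ t, ν (γ t) = -Complex.I * deriv γ t)
    (κ : ℂ → ℝ) (hκ : ∀ t, deriv (fun s => ν (γ s)) t = (κ (γ t) : ℂ) * deriv γ t)
    (κ' : ℂ → ℝ) (hκ' : ∀ t, deriv (fun s => κ (γ s)) t = κ' (γ t))
    (Ω : Set ℂ) (hΩopen : IsOpen Ω) (hΩconn : IsConnected Ω)
    (hΓfr : Γset ⊆ frontier Ω)
    (hΓcomp : ∀ q ∈ Γset, connectedComponentIn (frontier Ω) q = Γset)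
    (d : ℂ → ℝ) (hd : ∀ z, d z = Metric.infDist z Γset)
    (δ : ℝ) (hδ : 0 < δ) (hκδ : ∀ q ∈ Γset, |κ q| < 1/δ)
    (p : ℂ → ℂ)
    (hp : ∀ z ∈ Ω, d z ≤ δ →
      p z ∈ Γset ∧ dist z (p z) = d z ∧ ∀ q ∈ Γset, dist z q = d z → q = p z)
    (hin : ∀ z ∈ Ω, d z ≤ δ → z = p z - (d z : ℝ) • ν (p z))
    -- the limit solution v at distance δ from Γ
    (v : ℝ → ℂ) (hvC : ContDiff ℝ 1 v) (hvΩ : ∀ t, v t ∈ Ω)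
    (hvper : Function.Periodic v L) (hvd : ∀ t, d (v t) = δ)
    (hvode : ∀ t, deriv v t = (1 - δ * κ (p (v t))) • (Complex.I * ν (p (v t))))
    -- the kernel element w
    (w : ℝ → ℂ) (hwC : ContDiff ℝ 1 w) (hwper : Function.Periodic w L)
    (hw : ∀ t,
      deriv w t
        + (κ (p (v t)) * ipr (Complex.I * ν (p (v t))) (w t)) • ν (p (v t))
        + ((δ * κ' (p (v t)) / (1 - δ * κ (p (v t))))
            * ipr (Complex.I * ν (p (v t))) (w t)) • (Complex.I * ν (p (v t)))
        - ((1/δ) * ipr (ν (p (v t))) (w t)) • (Complex.I * ν (p (v t))) = 0) :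
    ∃ c : ℝ, ∀ t, w t = c • deriv v t := by
  subst hΓ
  have hfoot := fun t => hp (v t) (hvΩ t) (hvd t).le
  exact kernel_of_linearization_general L hL γ hγC hγper hγunit ν hν κ hκ κ' hκ' δ hδ.ne'
    (fun t => p (v t)) (fun t => (hfoot t).1) (hvper.comp p)
    (fun t => (lt_div_iff₀' hδ).1 (abs_lt.1 (hκδ _ (hfoot t).1)).2)
    v hvC (fun t => hvd t ▸ hin (v t) (hvΩ t) (hvd t).le) hvode
    w (hwC.differentiable one_ne_zero) hwper hw
end

section
/- Kernel of the adjoint linearization: define a(t) = δ·κ'(p(v(t)))/(1 - δκ(p(v(t)))). Then a(t) = -(d/dt)log(1 - δκ(p(v(t)))), and whenever q, s : ℝ → ℝ are C¹ and L-periodic with q'(t) = a(t)q(t) and s'(t) = a(t)s(t) + q(t)/δ for all t, one has q ≡ 0 and t ↦ s(t)(1 - δκ(p(v(t)))) is constant; consequently w := s·v' + q·ν(p(v)) is a constant real multiple of i·ν(p(v)). -/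
open Filter Topology

section Reparametrization

variable {𝕜 E F : Type*} [NontriviallyNormedField 𝕜]
  [NormedAddCommGroup E] [NormedSpace 𝕜 E] [NormedAddCommGroup F] [NormedSpace 𝕜 F]

theorem tendsto_dslope_of_hasDerivAt {f : 𝕜 → E} {f' : E} {x : 𝕜} (hf : HasDerivAt f f' x) :
    Tendsto (dslope f x) (𝓝 x) (𝓝 f') := by
  rw [← hf.deriv, ← dslope_same f x]
  exact (continuousAt_dslope_same.2 hf.differentiableAt).tendsto

theorem tendsto_smul_sub_of_tendsto_mul_sub {ι : Type*} {l : Filter ι} {f : 𝕜 → E} {f' : E}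
    {x c : 𝕜} {σ r : ι → 𝕜} (hf : HasDerivAt f f' x) (hσ : Tendsto σ l (𝓝 x))
    (hr : Tendsto (fun i => r i * (σ i - x)) l (𝓝 c)) :
    Tendsto (fun i => r i • (f (σ i) - f x)) l (𝓝 (c • f')) := by
  refine (hr.smul ((tendsto_dslope_of_hasDerivAt hf).comp hσ)).congr fun i => ?_
  rw [Function.comp_apply, mul_smul, sub_smul_dslope]

theorem tendsto_mul_sub_of_tendsto_smul_sub [SeparatingDual 𝕜 E] {ι : Type*} {l : Filter ι}
    {f : 𝕜 → E} {f' : E} {x c : 𝕜} {σ r : ι → 𝕜} (hf : HasDerivAt f f' x) (hf' : f' ≠ 0)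
    (hσ : Tendsto σ l (𝓝 x)) (hr : Tendsto (fun i => r i • (f (σ i) - f x)) l (𝓝 (c • f'))) :
    Tendsto (fun i => r i * (σ i - x)) l (𝓝 c) := by
  obtain ⟨φ, hφ⟩ := SeparatingDual.exists_eq_one (R := 𝕜) hf'
  have hg : HasDerivAt (fun y => φ (f y)) 1 x := hφ ▸ φ.hasFDerivAt.comp_hasDerivAt x hf
  have hslope : Tendsto (fun i => dslope (fun y => φ (f y)) x (σ i)) l (𝓝 1) :=
    (tendsto_dslope_of_hasDerivAt hg).comp hσ
  have hincr : Tendsto (fun i => r i * (φ (f (σ i)) - φ (f x))) l (𝓝 c) := by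
    simpa only [Function.comp_def, map_smul, map_sub, hφ, smul_eq_mul, mul_one] using
      (φ.continuous.tendsto _).comp hr
  have hquot := hincr.div hslope one_ne_zero
  rw [div_one] at hquot
  refine hquot.congr' ?_
  filter_upwards [hslope.eventually_ne one_ne_zero] with i hi
  rw [Pi.div_apply, ← sub_smul_dslope (fun y => φ (f y)) x, smul_eq_mul, ← mul_assoc,
    mul_div_cancel_right₀ _ hi]

-- `u` need not lift continuously through `γ`, so the chain rule is applied along ultrafilters.
theorem hasDerivAt_comp_of_velocity_eq_smul [SeparatingDual 𝕜 E] {X : Type*} [TopologicalSpace X]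
    [T2Space X] {γ u : 𝕜 → X} {K : Set 𝕜} {Φ : X → E} {Ψ : X → F} {t c : 𝕜} {w : E} {y : F}
    (hγ : Continuous γ) (hu : ContinuousAt u t) (hK : IsCompact K) (huK : ∀ s, u s ∈ γ '' K)
    (hw : w ≠ 0) (hΦγ : ∀ x, γ x = u t → HasDerivAt (fun τ => Φ (γ τ)) w x)
    (hΦu : HasDerivAt (fun s => Φ (u s)) (c • w) t)
    (hΨγ : ∀ x, γ x = u t → HasDerivAt (fun τ => Ψ (γ τ)) y x) :
    HasDerivAt (fun s => Ψ (u s)) (c • y) t := by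
  choose σ hσK hσ using huK
  rw [hasDerivAt_iff_tendsto_slope] at hΦu ⊢
  refine tendsto_iff_ultrafilter _ _ _ |>.2 fun U hU => ?_
  obtain ⟨x, -, hx⟩ := hK.ultrafilter_le_nhds (U.map σ)
    (tendsto_principal.2 (Eventually.of_forall hσK))
  have hσx : Tendsto σ U (𝓝 x) := hx
  have hγx : γ x = u t := by
    refine tendsto_nhds_unique ((hγ.tendsto x).comp hσx) ?_
    exact (hu.tendsto.mono_left (hU.trans nhdsWithin_le_nhds)).congr fun s => (hσ s).symm
  have hspeed : Tendsto (fun s => (s - t)⁻¹ * (σ s - x)) U (𝓝 c) := by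
    refine tendsto_mul_sub_of_tendsto_smul_sub (hΦγ x hγx) hw hσx ?_
    simpa only [hσ, hγx] using! hΦu.mono_left hU
  simpa only [hσ, hγx] using! tendsto_smul_sub_of_tendsto_mul_sub (hΨγ x hγx) hσx hspeed

end Reparametrization

theorem differentiable_of_differentiable_smul {E : Type*} [NormedAddCommGroup E]
    [InnerProductSpace ℝ E] {k : ℝ → ℝ} {e : ℝ → E} (he : Differentiable ℝ e)
    (hunit : ∀ t, ‖e t‖ = 1) (hke : Differentiable ℝ fun t => k t • e t) : Differentiable ℝ k := by
  have hk : k = fun t => inner ℝ (e t) (k t • e t) := by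
    funext t
    rw [inner_smul_right, real_inner_self_eq_norm_sq, hunit, one_pow, mul_one]
  rw [hk]
  exact he.inner ℝ hke

theorem periodic_deriv {𝕜 E : Type*} [NontriviallyNormedField 𝕜] [NormedAddCommGroup E]
    [NormedSpace 𝕜 E] {f : 𝕜 → E} {L : 𝕜} (hf : Function.Periodic f L) :
    Function.Periodic (deriv f) L := fun t => by
  rw [← deriv_comp_add_const, funext hf]

theorem eq_zero_of_hasDerivAt_const_of_periodic {f : ℝ → ℝ} {k L : ℝ} (hL : 0 < L)
    (hf : ∀ t, HasDerivAt f k t) (hper : Function.Periodic f L) : k = 0 := by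
  obtain ⟨-, -, hk⟩ := exists_hasDerivAt_eq_zero hL
    (fun t _ => (hf t).continuousAt.continuousWithinAt) hper.eq.symm fun t _ => hf t
  exact hk

theorem exists_eq_const_of_hasDerivAt_zero {f : ℝ → ℝ} (hf : ∀ t, HasDerivAt f 0 t) :
    ∃ c, ∀ t, f t = c :=
  ⟨f 0, fun t => is_const_of_deriv_eq_zero (fun x => (hf x).differentiableAt)
    (fun x => (hf x).deriv) t 0⟩

theorem hasDerivAt_mul_integratingFactor {𝕜 : Type*} [NontriviallyNormedField 𝕜]
    {m s : 𝕜 → 𝕜} {a b t : 𝕜} (hm : HasDerivAt m (-(a * m t)) t)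
    (hs : HasDerivAt s (a * s t + b) t) : HasDerivAt (fun r => s r * m r) (b * m t) t :=
  (hs.mul hm).congr_deriv (by ring)

theorem eq_zero_and_exists_mul_eq_const_of_periodic {a m q s : ℝ → ℝ} {L δ : ℝ} (hL : 0 < L)
    (hδ : δ ≠ 0) (hm₀ : ∀ t, m t ≠ 0) (hm : ∀ t, HasDerivAt m (-(a t * m t)) t)
    (hmper : Function.Periodic m L) (hsper : Function.Periodic s L)
    (hq : ∀ t, HasDerivAt q (a t * q t) t)
    (hs : ∀ t, HasDerivAt s (a t * s t + q t / δ) t) :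
    (∀ t, q t = 0) ∧ ∃ c, ∀ t, s t * m t = c := by
  obtain ⟨c, hc⟩ : ∃ c, ∀ t, q t * m t = c := exists_eq_const_of_hasDerivAt_zero fun t => by
    simpa only [zero_mul] using
      hasDerivAt_mul_integratingFactor (hm t) ((hq t).congr_deriv (add_zero _).symm)
  have hsm : ∀ t, HasDerivAt (fun r => s r * m r) (c / δ) t := fun t =>
    (hasDerivAt_mul_integratingFactor (hm t) (hs t)).congr_deriv (by rw [← hc t]; ring)
  have hcδ : c / δ = 0 := eq_zero_of_hasDerivAt_const_of_periodic hL hsm (hsper.mul hmper)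
  have hc₀ : c = 0 := (div_eq_zero_iff.1 hcδ).resolve_right hδ
  exact ⟨fun t => (mul_eq_zero.1 ((hc t).trans hc₀)).resolve_right (hm₀ t),
    exists_eq_const_of_hasDerivAt_zero (hcδ ▸ hsm)⟩

/-- A `C³` plane curve `γ` of unit speed with normal `ν = -iγ'`, curvature `κ` and arclength
derivative `κ'` of the curvature.  The last three are functions of the point rather than of the
parameter, so `γ` may cross itself only where these data agree. -/
structure IsFramedCurve (γ : ℝ → ℂ) (ν : ℂ → ℂ) (κ κ' : ℂ → ℝ) : Prop where
  contDiff : ContDiff ℝ 3 γ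
  norm_deriv : ∀ t, ‖deriv γ t‖ = 1
  normal : ∀ t, ν (γ t) = -Complex.I * deriv γ t
  deriv_normal : ∀ t, deriv (fun s => ν (γ s)) t = (κ (γ t) : ℂ) * deriv γ t
  deriv_curvature : ∀ t, deriv (fun s => κ (γ s)) t = κ' (γ t)

/-- A solution `v` of the limit system at signed distance `δ` from the curve `γ`.  The curve `u` of
foot points replaces `p ∘ v`: `u t` is any point of the curve whose normal segment of signed length
`δ` ends at `v t` before the centre of curvature, not necessarily a nearest point. -/
structure IsLimitSolution (γ : ℝ → ℂ) (ν : ℂ → ℂ) (κ : ℂ → ℝ) (δ : ℝ) (u v : ℝ → ℂ) : Prop where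
  contDiff : ContDiff ℝ 1 v
  foot_mem : ∀ t, u t ∈ Set.range γ
  eq_foot_sub : ∀ t, v t = u t - δ • ν (u t)
  one_sub_pos : ∀ t, 0 < 1 - δ * κ (u t)
  deriv_eq : ∀ t, deriv v t = (1 - δ * κ (u t)) • (Complex.I * ν (u t))

namespace IsFramedCurve

variable {γ : ℝ → ℂ} {ν : ℂ → ℂ} {κ κ' : ℂ → ℝ}

theorem I_mul_normal (hγ : IsFramedCurve γ ν κ κ') (t : ℝ) :
    Complex.I * ν (γ t) = deriv γ t := by
  rw [hγ.normal, ← mul_assoc, mul_neg, Complex.I_mul_I, neg_neg, one_mul]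

theorem contDiff_deriv (hγ : IsFramedCurve γ ν κ κ') : ContDiff ℝ 2 (deriv γ) :=
  ContDiff.deriv' (by exact_mod_cast hγ.contDiff)

theorem contDiff_normal (hγ : IsFramedCurve γ ν κ κ') : ContDiff ℝ 2 fun t => ν (γ t) := by
  rw [funext hγ.normal]
  exact contDiff_const.mul hγ.contDiff_deriv

theorem hasDerivAt_curvature (hγ : IsFramedCurve γ ν κ κ') (t : ℝ) :
    HasDerivAt (fun s => κ (γ s)) (κ' (γ t)) t := by
  have hν' : ContDiff ℝ 1 (deriv fun s => ν (γ s)) :=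
    ContDiff.deriv' (by exact_mod_cast hγ.contDiff_normal)
  have hκ : Differentiable ℝ fun s => κ (γ s) := by
    refine differentiable_of_differentiable_smul (hγ.contDiff_deriv.differentiable two_ne_zero)
      hγ.norm_deriv ?_
    simpa only [funext hγ.deriv_normal, Complex.real_smul] using hν'.differentiable one_ne_zero
  exact hγ.deriv_curvature t ▸ (hκ t).hasDerivAt

theorem hasDerivAt_sub_smul_normal (hγ : IsFramedCurve γ ν κ κ') (δ t : ℝ) :
    HasDerivAt (fun s => γ s - δ • ν (γ s)) ((1 - δ * κ (γ t)) • deriv γ t) t := by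
  have hγ' := (hγ.contDiff.differentiable three_ne_zero t).hasDerivAt
  have hν' := (hγ.contDiff_normal.differentiable two_ne_zero t).hasDerivAt
  refine (hγ'.sub (hν'.const_smul δ)).congr_deriv ?_
  rw [hγ.deriv_normal, ← Complex.real_smul, sub_smul, one_smul, mul_smul]

end IsFramedCurve

namespace IsLimitSolution

variable {γ : ℝ → ℂ} {ν : ℂ → ℂ} {κ κ' : ℂ → ℝ} {δ L : ℝ} {u v : ℝ → ℂ}

theorem of_abs_curvature_lt (hδ : 0 < δ) (hκ : ∀ z ∈ Set.range γ, |κ z| < 1 / δ)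
    (hvC : ContDiff ℝ 1 v) (hu : ∀ t, u t ∈ Set.range γ) (hvu : ∀ t, v t = u t - δ • ν (u t))
    (hv' : ∀ t, deriv v t = (1 - δ * κ (u t)) • (Complex.I * ν (u t))) :
    IsLimitSolution γ ν κ δ u v where
  contDiff := hvC
  foot_mem := hu
  eq_foot_sub := hvu
  one_sub_pos t := sub_pos.2 <| (lt_div_iff₀' hδ).1 ((le_abs_self _).trans_lt (hκ _ (hu t)))
  deriv_eq := hv'

theorem norm_I_mul_normal (hv : IsLimitSolution γ ν κ δ u v) (hγ : IsFramedCurve γ ν κ κ')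
    (t : ℝ) : ‖Complex.I * ν (u t)‖ = 1 := by
  obtain ⟨τ, hτ⟩ := hv.foot_mem t
  rw [← hτ, hγ.I_mul_normal, hγ.norm_deriv]

theorem deriv_ne_zero (hv : IsLimitSolution γ ν κ δ u v) (hγ : IsFramedCurve γ ν κ κ') (t : ℝ) :
    deriv v t ≠ 0 := by
  rw [hv.deriv_eq]
  exact smul_ne_zero (hv.one_sub_pos t).ne'
    (norm_ne_zero_iff.1 ((hv.norm_I_mul_normal hγ t).trans_ne one_ne_zero))

theorem foot_eq (hv : IsLimitSolution γ ν κ δ u v) (hγ : IsFramedCurve γ ν κ κ') (t : ℝ) :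
    u t = v t - δ • (Complex.I * (‖deriv v t‖⁻¹ • deriv v t)) := by
  have htangent : ‖deriv v t‖⁻¹ • deriv v t = Complex.I * ν (u t) := by
    rw [hv.deriv_eq, norm_smul, hv.norm_I_mul_normal hγ, mul_one,
      Real.norm_of_nonneg (hv.one_sub_pos t).le, inv_smul_smul₀ (hv.one_sub_pos t).ne']
  rw [htangent, ← mul_assoc, Complex.I_mul_I, neg_one_mul, smul_neg, sub_neg_eq_add,
    hv.eq_foot_sub t, sub_add_cancel]

theorem continuous_foot (hv : IsLimitSolution γ ν κ δ u v) (hγ : IsFramedCurve γ ν κ κ') :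
    Continuous u := by
  have hv' : Continuous (deriv v) := hv.contDiff.continuous_deriv le_rfl
  have hspeed : ∀ t, ‖deriv v t‖ ≠ 0 := fun t => norm_ne_zero_iff.2 (hv.deriv_ne_zero hγ t)
  rw [funext (hv.foot_eq hγ)]
  exact hv.contDiff.continuous.sub
    ((continuous_const.mul ((hv'.norm.inv₀ hspeed).smul hv')).const_smul δ)

theorem periodic_foot (hv : IsLimitSolution γ ν κ δ u v) (hγ : IsFramedCurve γ ν κ κ')
    (hvper : Function.Periodic v L) : Function.Periodic u L := fun t => by
  rw [hv.foot_eq hγ, hv.foot_eq hγ, hvper, periodic_deriv hvper]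

theorem hasDerivAt_comp_foot {F : Type*} [NormedAddCommGroup F] [NormedSpace ℝ F] {Ψ Ψ' : ℂ → F}
    (hv : IsLimitSolution γ ν κ δ u v) (hγ : IsFramedCurve γ ν κ κ') (hL : 0 < L)
    (hγper : Function.Periodic γ L) (hΨ : ∀ τ, HasDerivAt (fun s => Ψ (γ s)) (Ψ' (γ τ)) τ)
    (t : ℝ) : HasDerivAt (fun s => Ψ (u s)) (Ψ' (u t)) t := by
  rw [← one_smul ℝ (Ψ' (u t))]
  refine hasDerivAt_comp_of_velocity_eq_smul (K := Set.Icc 0 (0 + L)) (Φ := fun z => z - δ • ν z)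
    hγ.contDiff.continuous (hv.continuous_foot hγ).continuousAt isCompact_Icc
    (fun s => hγper.image_Icc hL 0 ▸ hv.foot_mem s) (hv.deriv_ne_zero hγ t)
    (fun τ hτ => ?_) ?_ fun τ hτ => hτ ▸ hΨ τ
  · rw [hv.deriv_eq, ← hτ, hγ.I_mul_normal]
    exact hγ.hasDerivAt_sub_smul_normal δ τ
  · rw [one_smul, ← funext hv.eq_foot_sub]
    exact (hv.contDiff.differentiable one_ne_zero t).hasDerivAt

end IsLimitSolution

theorem kernel_of_adjoint_linearization_general {γ u v : ℝ → ℂ} {ν : ℂ → ℂ} {κ κ' : ℂ → ℝ}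
    {L δ : ℝ} {a : ℝ → ℝ} (hL : 0 < L) (hδ : δ ≠ 0) (hγ : IsFramedCurve γ ν κ κ')
    (hγper : Function.Periodic γ L) (hv : IsLimitSolution γ ν κ δ u v)
    (hvper : Function.Periodic v L) (ha : ∀ t, a t = δ * κ' (u t) / (1 - δ * κ (u t))) :
    (∀ t, a t = -deriv (fun s => Real.log (1 - δ * κ (u s))) t) ∧
    ∀ q s : ℝ → ℝ, Differentiable ℝ q → Differentiable ℝ s → Function.Periodic s L →
      (∀ t, deriv q t = a t * q t) → (∀ t, deriv s t = a t * s t + q t / δ) →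
      (∀ t, q t = 0) ∧
      (∃ c : ℝ, ∀ t, s t * (1 - δ * κ (u t)) = c) ∧
      (∃ c : ℝ, ∀ t, s t • deriv v t + q t • ν (u t) = c • (Complex.I * ν (u t))) := by
  have hm₀ : ∀ t, 1 - δ * κ (u t) ≠ 0 := fun t => (hv.one_sub_pos t).ne'
  have hm : ∀ t, HasDerivAt (fun r => 1 - δ * κ (u r)) (-(a t * (1 - δ * κ (u t)))) t := fun t => by
    rw [ha, div_mul_cancel₀ _ (hm₀ t)]
    exact ((hv.hasDerivAt_comp_foot hγ hL hγper hγ.hasDerivAt_curvature t).const_mul δ).const_sub 1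
  refine ⟨fun t => ?_, fun q s hq hs hsper hq' hs' => ?_⟩
  · rw [((hm t).log (hm₀ t)).deriv, neg_div, neg_neg, mul_div_cancel_right₀ _ (hm₀ t)]
  · have hmper : Function.Periodic (fun t => 1 - δ * κ (u t)) L :=
      (hv.periodic_foot hγ hvper).comp fun z => 1 - δ * κ z
    obtain ⟨hq₀, c, hc⟩ := eq_zero_and_exists_mul_eq_const_of_periodic hL hδ hm₀ hm hmper
      hsper (fun t => hq' t ▸ (hq t).hasDerivAt) (fun t => hs' t ▸ (hs t).hasDerivAt)
    refine ⟨hq₀, ⟨c, hc⟩, c, fun t => ?_⟩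
    rw [hq₀, hv.deriv_eq, zero_smul, add_zero, smul_smul, hc]

/-- Kernel of the adjoint linearization: with
`a(t) = δκ'(p(v(t)))/(1 - δκ(p(v(t))))` one has `a = -(d/dt)log(1 - δκ(p(v)))`, and
any C¹ `L`-periodic solution `(q,s)` of `q' = aq`, `s' = as + q/δ` satisfies `q ≡ 0`,
`s·(1 - δκ(p(v)))` constant; consequently `w = s·v' + q·ν(p(v))` is a constant real
multiple of `i·ν(p(v))`. -/
theorem kernel_of_adjoint_linearization
    (L : ℝ) (hL : 0 < L) (γ : ℝ → ℂ)
    (hγC : ContDiff ℝ 3 γ) (hγper : Function.Periodic γ L)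
    (hγunit : ∀ t, ‖deriv γ t‖ = 1) (hγinj : Set.InjOn γ (Set.Ico 0 L))
    (Γset : Set ℂ) (hΓ : Γset = Set.range γ)
    (ν : ℂ → ℂ) (hν : ∀ t, ν (γ t) = -Complex.I * deriv γ t)
    (κ : ℂ → ℝ) (hκ : ∀ t, deriv (fun s => ν (γ s)) t = (κ (γ t) : ℂ) * deriv γ t)
    (κ' : ℂ → ℝ) (hκ' : ∀ t, deriv (fun s => κ (γ s)) t = κ' (γ t))
    (Ω : Set ℂ) (hΩopen : IsOpen Ω) (hΩconn : IsConnected Ω)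
    (hΓfr : Γset ⊆ frontier Ω)
    (hΓcomp : ∀ q ∈ Γset, connectedComponentIn (frontier Ω) q = Γset)
    (d : ℂ → ℝ) (hd : ∀ z, d z = Metric.infDist z Γset)
    (δ : ℝ) (hδ : 0 < δ) (hκδ : ∀ q ∈ Γset, |κ q| < 1/δ)
    (p : ℂ → ℂ)
    (hp : ∀ z ∈ Ω, d z ≤ δ →
      p z ∈ Γset ∧ dist z (p z) = d z ∧ ∀ q ∈ Γset, dist z q = d z → q = p z)
    (hin : ∀ z ∈ Ω, d z ≤ δ → z = p z - (d z : ℝ) • ν (p z))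
    -- the limit solution v at distance δ from Γ
    (v : ℝ → ℂ) (hvC : ContDiff ℝ 1 v) (hvΩ : ∀ t, v t ∈ Ω)
    (hvper : Function.Periodic v L) (hvd : ∀ t, d (v t) = δ)
    (hvode : ∀ t, deriv v t = (1 - δ * κ (p (v t))) • (Complex.I * ν (p (v t))))
    -- the coefficient a
    (a : ℝ → ℝ) (ha : ∀ t, a t = δ * κ' (p (v t)) / (1 - δ * κ (p (v t)))) :
    (∀ t, a t = -deriv (fun s => Real.log (1 - δ * κ (p (v s)))) t) ∧
    ∀ q s : ℝ → ℝ, ContDiff ℝ 1 q → ContDiff ℝ 1 s →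
      Function.Periodic q L → Function.Periodic s L →
      (∀ t, deriv q t = a t * q t) → (∀ t, deriv s t = a t * s t + q t / δ) →
      (∀ t, q t = 0) ∧
      (∃ c : ℝ, ∀ t, s t * (1 - δ * κ (p (v t))) = c) ∧
      (∃ c : ℝ, ∀ t,
        s t • deriv v t + q t • ν (p (v t)) = c • (Complex.I * ν (p (v t)))) := by
  subst hΓ
  have hv : IsLimitSolution γ ν κ δ (fun t => p (v t)) v :=
    .of_abs_curvature_lt hδ hκδ hvC (fun t => (hp (v t) (hvΩ t) (hvd t).le).1)
      (fun t => by simpa only [hvd t] using hin (v t) (hvΩ t) (hvd t).le) hvode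
  have hker := kernel_of_adjoint_linearization_general hL hδ.ne' ⟨hγC, hγunit, hν, hκ, hκ'⟩ hγper
    hv hvper ha
  exact ⟨hker.1, fun q s hq hs _ => hker.2 q s (hq.differentiable one_ne_zero)
    (hs.differentiable one_ne_zero)⟩
end

section
/- Asymptotics of the rotating polygon near the boundary: let N ≥ 1 be an integer and for s ∈ (0,1) define ω(s) = (1/(πs²))·(N/(1 - s^{2N}) - (N+1)/2) and r(s) = s²(1 - s^{2N})/(N - 1 + (N+1)s^{2N}). Then ω(s) = 1/(2π·r(s)) for all s ∈ (0,1), and ((1-s) - r(s) - (1/2)r(s)²)/r(s)² → 0 as s → 1⁻. -/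
/-!
Write `r(s) = (1 - s) g(s)`. Then `((1 - s) - r - c r²) / r² = (slope g 1 s - c g²) / g²`, which
tends to `0` as soon as `g(1) = 1` and `g'(1) = c`. Here
`g(s) = s² A(s) / (N - 1 + (N + 1) s^(2N))`, where `A` is the difference quotient of `s^(2N)` at
`1`. Taylor expansion gives `A(1) = 2N` and `A'(1) = N(2N - 1)`, so `g(1) = 1` and logarithmic
differentiation yields `g'(1) = 2 + (2N - 1)/2 - (N + 1) = 1/2`.
-/

open Filter Topology

lemma hasDerivAt_dslope_same {f f' : ℝ → ℝ} {a c : ℝ}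
    (hf : ∀ᶠ x in 𝓝 a, HasDerivAt f (f' x) x) (hf' : HasDerivAt f' c a) :
    HasDerivAt (dslope f a) (c / 2) a := by
  have hfa : HasDerivAt f (f' a) a := hf.self_of_nhds
  have hremainder : ∀ᶠ x in 𝓝[≠] a,
      HasDerivAt (fun x ↦ f x - f a - f' a * (x - a)) (f' x - f' a) x := by
    filter_upwards [hf.filter_mono nhdsWithin_le_nhds] with x hx
    simpa using (hx.sub_const (f a)).fun_sub (((hasDerivAt_id x).sub_const a).const_mul (f' a))
  have hsquare : ∀ᶠ x in 𝓝[≠] a, HasDerivAt (fun x ↦ (x - a) ^ 2) (2 * (x - a)) x :=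
    .of_forall fun x ↦ by simpa using ((hasDerivAt_id x).sub_const a).fun_pow 2
  have hsquare_ne : ∀ᶠ x in 𝓝[≠] a, 2 * (x - a) ≠ 0 := by
    filter_upwards [self_mem_nhdsWithin] with x hx
    simpa [sub_eq_zero] using hx
  have hratio : Tendsto (fun x ↦ (f' x - f' a) / (2 * (x - a))) (𝓝[≠] a) (𝓝 (c / 2)) := by
    refine (hf'.tendsto_slope.div_const 2).congr fun x ↦ ?_
    rw [slope_def_field, div_div, mul_comm]
  have hquotient : Tendsto (fun x ↦ (f x - f a - f' a * (x - a)) / (x - a) ^ 2) (𝓝[≠] a)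
      (𝓝 (c / 2)) := by
    refine HasDerivAt.lhopital_zero_nhdsNE hremainder hsquare hsquare_ne ?_ ?_ hratio
    · have hcont : ContinuousAt (fun x ↦ f x - f a - f' a * (x - a)) a := by
        have := hfa.continuousAt
        fun_prop
      simpa using hcont.tendsto.mono_left nhdsWithin_le_nhds
    · have hcont : ContinuousAt (fun x ↦ (x - a) ^ 2) a := by fun_prop
      simpa using hcont.tendsto.mono_left nhdsWithin_le_nhds
  rw [hasDerivAt_iff_tendsto_slope]
  refine hquotient.congr' ?_
  filter_upwards [self_mem_nhdsWithin] with x hx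
  have hxa : x - a ≠ 0 := sub_ne_zero.mpr hx
  rw [slope_def_field, dslope_same, hfa.deriv, dslope_of_ne f hx, slope_def_field]
  field_simp

lemma dslope_rpow_one (p : ℝ) : dslope (fun x : ℝ ↦ x ^ p) 1 1 = p := by
  simp [dslope_same]

lemma hasDerivAt_dslope_rpow_one (p : ℝ) :
    HasDerivAt (dslope (fun x : ℝ ↦ x ^ p) 1) (p * (p - 1) / 2) 1 := by
  have hfirst : ∀ᶠ x : ℝ in 𝓝 1, HasDerivAt (fun x ↦ x ^ p) (p * x ^ (p - 1)) x := by
    filter_upwards [eventually_ne_nhds one_ne_zero] with x hx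
    exact Real.hasDerivAt_rpow_const (.inl hx)
  have hsecond : HasDerivAt (fun x : ℝ ↦ p * x ^ (p - 1)) (p * (p - 1)) 1 := by
    simpa using (Real.hasDerivAt_rpow_const (p := p - 1) (.inl one_ne_zero)).const_mul p
  exact hasDerivAt_dslope_same hfirst hsecond

lemma tendsto_sub_sub_const_mul_sq_div_sq {𝕜 : Type*} [NontriviallyNormedField 𝕜] {g : 𝕜 → 𝕜}
    {a c : 𝕜} (hga : g a = 1) (hg : HasDerivAt g c a) :
    Tendsto (fun s ↦ ((a - s) - (a - s) * g s - c * ((a - s) * g s) ^ 2) / ((a - s) * g s) ^ 2)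
      (𝓝[≠] a) (𝓝 0) := by
  have hg_tendsto : Tendsto g (𝓝[≠] a) (𝓝 1) :=
    hga ▸ hg.continuousAt.tendsto.mono_left nhdsWithin_le_nhds
  have hlim : Tendsto (fun s ↦ (slope g a s - c * g s ^ 2) / g s ^ 2) (𝓝[≠] a) (𝓝 0) := by
    have hnum := hg.tendsto_slope.sub ((hg_tendsto.pow 2).const_mul c)
    simpa [Pi.div_def] using hnum.div (hg_tendsto.pow 2) (by simp)
  refine hlim.congr' ?_
  filter_upwards [hg_tendsto.eventually_ne one_ne_zero, self_mem_nhdsWithin] with s hgs hs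
  have has : a - s ≠ 0 := sub_ne_zero.mpr (Ne.symm hs)
  rw [slope_comm, slope_def_field, hga]
  field_simp

/-- The factor `g` in `r(s) = (1 - s) g(s)`. The difference quotient of `s ^ (2 * N)` at `1` is
encoded by `dslope`, so that `g` is differentiable at `s = 1`. -/
noncomputable def radiusFactor (N s : ℝ) : ℝ :=
  s ^ 2 * dslope (fun x : ℝ ↦ x ^ (2 * N)) 1 s / (N - 1 + (N + 1) * s ^ (2 * N))

lemma one_sub_mul_radiusFactor (N s : ℝ) :
    (1 - s) * radiusFactor N s =
      s ^ 2 * (1 - s ^ (2 * N)) / (N - 1 + (N + 1) * s ^ (2 * N)) := by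
  have hslope : (s - 1) * dslope (fun x : ℝ ↦ x ^ (2 * N)) 1 s = s ^ (2 * N) - 1 := by
    simpa using sub_smul_dslope (fun x : ℝ ↦ x ^ (2 * N)) 1 s
  rw [radiusFactor, ← mul_div_assoc]
  congr 1
  linear_combination -s ^ 2 * hslope

lemma radiusFactor_one {N : ℝ} (hN : N ≠ 0) : radiusFactor N 1 = 1 := by
  have hden : N - 1 + (N + 1) * 1 = 2 * N := by ring
  rw [radiusFactor, dslope_rpow_one, Real.one_rpow, hden, one_pow, one_mul]
  exact div_self (by simpa using hN)

lemma hasDerivAt_radiusFactor_one {N : ℝ} (hN : N ≠ 0) :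
    HasDerivAt (radiusFactor N) (1 / 2) 1 := by
  have hpow : HasDerivAt (fun s : ℝ ↦ s ^ (2 * N)) (2 * N) 1 := by
    simpa using Real.hasDerivAt_rpow_const (p := 2 * N) (.inl (one_ne_zero (α := ℝ)))
  have hnum := (hasDerivAt_pow 2 (1 : ℝ)).mul (hasDerivAt_dslope_rpow_one (2 * N))
  have hden := (hpow.const_mul (N + 1)).const_add (N - 1)
  have hden_one : N - 1 + (N + 1) * (1 : ℝ) ^ (2 * N) = 2 * N := by
    rw [Real.one_rpow]
    ring
  refine (hnum.div hden (by simpa [hden_one] using hN)).congr_deriv ?_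
  simp only [Pi.mul_apply, dslope_rpow_one, hden_one]
  field_simp
  ring

lemma div_one_sub_sub_add_one_div_two {K : Type*} [Field K] [NeZero (2 : K)] {q : K} (hq : q ≠ 1)
    (n : K) : n / (1 - q) - (n + 1) / 2 = (n - 1 + (n + 1) * q) / (2 * (1 - q)) := by
  have hq' : 1 - q ≠ 0 := sub_ne_zero.mpr hq.symm
  have h2 : (2 : K) ≠ 0 := NeZero.ne 2
  field_simp
  ring

theorem rotating_polygon_boundary_asymptotics_general
    (N : ℝ) (hN : N ≠ 0)
    (ω r : ℝ → ℝ)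
    (hω : ∀ s : ℝ, ω s = (1 / (Real.pi * s ^ 2)) * (N / (1 - s ^ (2 * N)) - (N + 1) / 2))
    (hr : ∀ s : ℝ, r s = s ^ 2 * (1 - s ^ (2 * N)) / (N - 1 + (N + 1) * s ^ (2 * N))) :
    (∀ s > 0, s ≠ 1 → N - 1 + (N + 1) * s ^ (2 * N) ≠ 0 → ω s = 1 / (2 * Real.pi * r s)) ∧
    Tendsto (fun s ↦ ((1 - s) - r s - (1 / 2) * (r s) ^ 2) / (r s) ^ 2) (𝓝[≠] 1) (𝓝 0) := by
  constructor
  · intro s hs hs1 _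
    have hpow : s ^ (2 * N) ≠ 1 := by
      rw [← Real.one_rpow (2 * N), Ne, Real.rpow_left_inj hs.le zero_le_one (by simpa using hN)]
      exact hs1
    rw [hω, hr, div_one_sub_sub_add_one_div_two hpow]
    field_simp
  · simpa only [one_sub_mul_radiusFactor, ← hr] using
      tendsto_sub_sub_const_mul_sq_div_sq (radiusFactor_one hN) (hasDerivAt_radiusFactor_one hN)

/-- Asymptotics of the rotating polygon near the boundary:
`ω(s) = 1/(2π·r(s))` on `(0,1)`, and `((1-s) - r(s) - (1/2)r(s)²)/r(s)² → 0`
as `s → 1⁻`. -/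
theorem rotating_polygon_boundary_asymptotics
    (N : ℕ) (hN : 1 ≤ N)
    (ω r : ℝ → ℝ)
    (hω : ∀ s : ℝ, ω s = (1/(Real.pi * s^2)) * ((N : ℝ)/(1 - s^(2*N)) - ((N : ℝ) + 1)/2))
    (hr : ∀ s : ℝ, r s = s^2 * (1 - s^(2*N)) / ((N : ℝ) - 1 + ((N : ℝ) + 1) * s^(2*N))) :
    (∀ s ∈ Set.Ioo (0:ℝ) 1, ω s = 1/(2 * Real.pi * r s)) ∧
    Filter.Tendsto (fun s => ((1 - s) - r s - (1/2) * (r s)^2) / (r s)^2)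
      (nhdsWithin 1 (Set.Iio 1)) (nhds 0) := by
  have hN' : (1 : ℝ) ≤ N := by exact_mod_cast hN
  have hrpow (s : ℝ) : s ^ (2 * (N : ℝ)) = s ^ (2 * N) := by
    exact_mod_cast Real.rpow_natCast s (2 * N)
  simp only [← hrpow] at hω hr
  obtain ⟨hidentity, hlimit⟩ :=
    rotating_polygon_boundary_asymptotics_general N (by positivity) ω r hω hr
  refine ⟨fun s hs ↦ hidentity s hs.1 hs.2.ne ?_, hlimit.mono_left (nhdsLT_le_nhdsNE 1)⟩
  have hpow : 0 < (N + 1) * s ^ (2 * (N : ℝ)) :=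
    mul_pos (by positivity) (Real.rpow_pos_of_pos hs.1 _)
  linarith
end

section
/- Interior Cauchy estimate for the fourth derivative: let Ω ⊂ ℂ be open with Ω ≠ ℂ, let f : Ω → ℂ be holomorphic, and suppose there are α ∈ (0,1] and M ≥ 0 with |f'''(w) - f'''(z)| ≤ M·|w - z|^α for all w, z ∈ Ω. Then |f''''(z)| ≤ 2^{1-α}·M·dist(z, ∂Ω)^{α-1} for all z ∈ Ω. -/
/-!
Let `z ∈ Ω` and let `d = dist(z, ∂Ω) > 0`. The ball of radius `d` about `z` is connected, meets `Ω`
and misses `∂Ω`, so it lies in `Ω`. Cauchy's estimate for `w ↦ f⁽³⁾(w) - f⁽³⁾(z)` on the circle of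
radius `d / 2` gives `|f⁽⁴⁾(z)| ≤ M (d / 2)^α / (d / 2)`, the claimed bound.
-/

theorem subset_of_isPreconnected_of_disjoint_frontier {X : Type*} [TopologicalSpace X]
    {s t : Set X} (ht : IsPreconnected t) (hts : (t ∩ s).Nonempty)
    (hd : Disjoint t (frontier s)) : t ⊆ s := by
  have hint : closure s ∩ t ⊆ interior s := fun x ⟨hxs, hxt⟩ =>
    by_contra fun hx => hd.notMem_of_mem_left hxt ⟨hxs, hx⟩
  obtain ⟨x, hxt, hxs⟩ := hts
  refine (ht.subset_of_closure_inter_subset isOpen_interior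
    ⟨x, hxt, hint ⟨subset_closure hxs, hxt⟩⟩ ?_).trans interior_subset
  exact (Set.inter_subset_inter_left t (closure_mono interior_subset)).trans hint

theorem infDist_frontier_pos {X : Type*} [PseudoMetricSpace X] [PreconnectedSpace X]
    {s : Set X} (hs : s ≠ Set.univ) {x : X} (hx : x ∈ interior s) :
    0 < Metric.infDist x (frontier s) :=
  (isClosed_frontier.notMem_iff_infDist_pos
    (nonempty_frontier_iff.2 ⟨⟨x, interior_subset hx⟩, hs⟩)).1
    (disjoint_interior_frontier.notMem_of_mem_left hx)

theorem ball_infDist_frontier_subset {E : Type*} [SeminormedAddCommGroup E] [NormedSpace ℝ E]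
    {s : Set E} {x : E} (hx : x ∈ s) : Metric.ball x (Metric.infDist x (frontier s)) ⊆ s := by
  intro y hy
  have hx_ball := Metric.mem_ball_self (x := x) (Metric.pos_of_mem_ball hy)
  exact subset_of_isPreconnected_of_disjoint_frontier (convex_ball x _).isPreconnected
    ⟨x, hx_ball, hx⟩ Metric.disjoint_ball_infDist hy

section Cauchy

variable {F : Type*} [NormedAddCommGroup F] [NormedSpace ℂ F]

theorem differentiableOn_iteratedDeriv [CompleteSpace F] {f : ℂ → F} {s : Set ℂ}
    (hf : DifferentiableOn ℂ f s) (hs : IsOpen s) (n : ℕ) :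
    DifferentiableOn ℂ (iteratedDeriv n f) s := by
  rw [iteratedDeriv_eq_iterate]
  exact ((hf.analyticOnNhd hs).iterated_deriv n).differentiableOn

theorem norm_deriv_le_of_forall_mem_sphere_norm_sub_le {g : ℂ → F} {c : ℂ} {r C : ℝ}
    (hr : 0 < r) (hg : DiffContOnCl ℂ g (Metric.ball c r))
    (hC : ∀ w ∈ Metric.sphere c r, ‖g w - g c‖ ≤ C) : ‖deriv g c‖ ≤ C / r := by
  rw [← deriv_sub_const (g c)]
  exact Complex.norm_deriv_le_of_forall_mem_sphere_norm_le hr (hg.sub_const _) hC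

theorem norm_deriv_le_mul_rpow_infDist_frontier {g : ℂ → F} {Ω : Set ℂ} (hΩ : IsOpen Ω)
    (hne : Ω ≠ Set.univ) (hg : DifferentiableOn ℂ g Ω) {α M : ℝ} {z : ℂ} (hz : z ∈ Ω)
    (hHolder : ∀ w ∈ Ω, ‖g w - g z‖ ≤ M * ‖w - z‖ ^ α) :
    ‖deriv g z‖ ≤ (2 : ℝ) ^ (1 - α) * M * Metric.infDist z (frontier Ω) ^ (α - 1) := by
  set d := Metric.infDist z (frontier Ω)
  have hd : 0 < d := infDist_frontier_pos hne (hΩ.interior_eq.symm ▸ hz)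
  have hsub : Metric.closedBall z (d / 2) ⊆ Ω :=
    (Metric.closedBall_subset_ball (half_lt_self hd)).trans (ball_infDist_frontier_subset hz)
  have hosc : ∀ w ∈ Metric.sphere z (d / 2), ‖g w - g z‖ ≤ M * (d / 2) ^ α := fun w hw => by
    simpa only [mem_sphere_iff_norm.1 hw] using
      hHolder w (hsub (Metric.sphere_subset_closedBall hw))
  calc ‖deriv g z‖ ≤ M * (d / 2) ^ α / (d / 2) :=
        norm_deriv_le_of_forall_mem_sphere_norm_sub_le (half_pos hd)
          ((hg.mono hsub).diffContOnCl_ball subset_rfl) hosc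
    _ = M * (d / 2) ^ (α - 1) := by rw [mul_div_assoc, ← Real.rpow_sub_one (half_pos hd).ne']
    _ = 2 ^ (1 - α) * M * d ^ (α - 1) := by
        rw [Real.div_rpow hd.le zero_le_two, ← neg_sub α 1, Real.rpow_neg zero_le_two]
        ring

theorem interior_cauchy_estimate_fourth_derivative_general [CompleteSpace F] {f : ℂ → F}
    {Ω : Set ℂ} (hΩ : IsOpen Ω) (hne : Ω ≠ Set.univ) (hf : DifferentiableOn ℂ f Ω) (n : ℕ)
    {α M : ℝ} {z : ℂ} (hz : z ∈ Ω)
    (hHolder : ∀ w ∈ Ω, ‖iteratedDeriv n f w - iteratedDeriv n f z‖ ≤ M * ‖w - z‖ ^ α) :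
    ‖iteratedDeriv (n + 1) f z‖ ≤
      (2 : ℝ) ^ (1 - α) * M * Metric.infDist z (frontier Ω) ^ (α - 1) := by
  rw [iteratedDeriv_succ]
  exact norm_deriv_le_mul_rpow_infDist_frontier hΩ hne (differentiableOn_iteratedDeriv hf hΩ n)
    hz hHolder

end Cauchy

/-- Interior Cauchy estimate for the fourth derivative: if `f` is
holomorphic on an open set `Ω ≠ ℂ` and `f'''` is `α`-Hölder with constant `M` on
`Ω`, then `|f''''(z)| ≤ 2^{1-α}·M·dist(z,∂Ω)^{α-1}` for all `z ∈ Ω`. -/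
theorem interior_cauchy_estimate_fourth_derivative
    (Ω : Set ℂ) (hΩopen : IsOpen Ω) (hΩne : Ω ≠ Set.univ)
    (f : ℂ → ℂ) (hf : DifferentiableOn ℂ f Ω)
    (α M : ℝ) (hα0 : 0 < α) (hα1 : α ≤ 1) (hM : 0 ≤ M)
    (hHolder : ∀ w ∈ Ω, ∀ z ∈ Ω,
      ‖iteratedDeriv 3 f w - iteratedDeriv 3 f z‖ ≤ M * ‖w - z‖ ^ α) :
    ∀ z ∈ Ω, ‖iteratedDeriv 4 f z‖ ≤
      (2:ℝ) ^ (1 - α) * M * Metric.infDist z (frontier Ω) ^ (α - 1) :=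
  fun z hz => interior_cauchy_estimate_fourth_derivative_general hΩopen hΩne hf 3 hz
    fun w hw => hHolder w hw z hz
end
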